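/- arXiv:2207.09053 — 11 statements merged into one kernel-verified Lean document; each statement's English description precedes it below -/
import Mathlib

section
/- If a positive integer n is k-layered, then: (i) k divides σ(n); (ii) if k is even, then there exists an odd prime p that divides n to an odd power (i.e., the multiplicity of p in n is odd); and (iii) σ(n) ≥ k·n. -/
/-- A positive integer `n` is `k`-layered if the set of all positive divisors of `n`
can be partitioned into `k` pairwise disjoint subsets (here given by the fibers of a
coloring `c`) each of which has the same sum. -/
def IsKLayered (n k : ℕ) : Prop :=
  ∃ c : ℕ → Fin k,
    ∀ i j : Fin k,
      ∑ d ∈ n.divisors.filter (fun d => c d = i), d =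
      ∑ d ∈ n.divisors.filter (fun d => c d = j), d

/-!
The `k` layers have equal sum, so `σ(n)` is `k` times the sum of the layer containing `n`, which is
at least `n`. By multiplicativity, `σ(n)` is the product of the sums `1 + p + ⋯ + p ^ m` over the
exact prime powers `p ^ m` of `n`; such a factor is even exactly when `p` and `m` are both odd.
-/

open Finset

theorem even_geom_sum_succ_iff (p m : ℕ) :
    Even (∑ i ∈ range (m + 1), p ^ i) ↔ Odd p ∧ Odd m := by
  rcases p.even_or_odd with hp | hp
  · have tail_even : Even (∑ i ∈ range m, p ^ (i + 1)) :=
      even_sum _ fun i _ => hp.pow_of_ne_zero i.succ_ne_zero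
    have sum_odd : Odd (∑ i ∈ range (m + 1), p ^ i) := by
      rw [sum_range_succ', pow_zero]
      exact tail_even.add_one
    simp only [Nat.not_even_iff_odd.mpr sum_odd, Nat.not_odd_iff_even.mpr hp, false_and]
  · rw [even_sum_iff_even_card_odd, filter_true_of_mem fun i _ => hp.pow, card_range,
      Nat.even_add_one, Nat.not_even_iff_odd, and_iff_right hp]

theorem even_sum_divisors_iff {n : ℕ} (hn : n ≠ 0) :
    Even (∑ d ∈ n.divisors, d) ↔ ∃ p : ℕ, p.Prime ∧ Odd p ∧ Odd (n.factorization p) := by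
  rw [Nat.sum_divisors hn, even_iff_two_dvd, Nat.prime_two.prime.dvd_finsetProd_iff]
  simp only [← even_iff_two_dvd, even_geom_sum_succ_iff]
  constructor
  · rintro ⟨p, hp, hparity⟩
    exact ⟨p, Nat.prime_of_mem_primeFactors hp, hparity⟩
  · rintro ⟨p, hp, hp_odd, hexp_odd⟩
    have hpn : p ∣ n := Nat.dvd_of_factorization_pos hexp_odd.pos.ne'
    exact ⟨p, hp.mem_primeFactors hpn hn, hp_odd, hexp_odd⟩

theorem sum_eq_card_nsmul_of_sum_fiber_eq {ι κ M : Type*} [AddCommMonoid M] [Fintype κ]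
    [DecidableEq κ] {s : Finset ι} {g : ι → κ} {f : ι → M} {m : M}
    (h : ∀ j, ∑ i ∈ s with g i = j, f i = m) :
    ∑ i ∈ s, f i = Fintype.card κ • m := by
  rw [← sum_fiberwise s g f, sum_congr rfl fun j _ => h j, sum_const, card_univ]

namespace IsKLayered

variable {n k : ℕ}

theorem exists_sum_divisors_eq_mul (h : IsKLayered n k) :
    ∃ c : ℕ → Fin k, ∀ i, ∑ d ∈ n.divisors, d = k * ∑ d ∈ n.divisors with c d = i, d := by
  obtain ⟨c, hc⟩ := h
  refine ⟨c, fun i => ?_⟩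
  simpa only [Fintype.card_fin, smul_eq_mul] using
    sum_eq_card_nsmul_of_sum_fiber_eq fun j => hc j i

theorem dvd_sum_divisors (h : IsKLayered n k) : k ∣ ∑ d ∈ n.divisors, d := by
  obtain ⟨c, hc⟩ := h.exists_sum_divisors_eq_mul
  exact ⟨_, hc (c n)⟩

theorem mul_le_sum_divisors (h : IsKLayered n k) {a : ℕ} (ha : a ∈ n.divisors) :
    k * a ≤ ∑ d ∈ n.divisors, d := by
  obtain ⟨c, hc⟩ := h.exists_sum_divisors_eq_mul
  have ha_layer : a ∈ n.divisors.filter fun d => c d = c a := mem_filter.mpr ⟨ha, rfl⟩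
  calc
    k * a ≤ k * ∑ d ∈ n.divisors with c d = c a, d :=
      Nat.mul_le_mul_left k (single_le_sum_of_canonicallyOrdered (f := id) ha_layer)
    _ = ∑ d ∈ n.divisors, d := (hc (c a)).symm

end IsKLayered

/-- If a positive integer `n` is `k`-layered, then (i) `k ∣ σ(n)`, (ii) if `k` is even
then some odd prime divides `n` to an odd power, and (iii) `σ(n) ≥ k * n`. -/
theorem layered_necessary_conditions (n k : ℕ) (hn : 0 < n) (hk : 0 < k)
    (h : IsKLayered n k) :
    k ∣ (∑ d ∈ n.divisors, d) ∧
    (Even k → ∃ p : ℕ, p.Prime ∧ Odd p ∧ Odd (n.factorization p)) ∧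
    k * n ≤ ∑ d ∈ n.divisors, d := by
  have hdvd : k ∣ ∑ d ∈ n.divisors, d := h.dvd_sum_divisors
  exact ⟨hdvd, fun hk_even => (even_sum_divisors_iff hn.ne').mp (hk_even.trans_dvd hdvd),
    h.mul_le_sum_divisors (Nat.mem_divisors_self n hn.ne')⟩
end

section
/- If a positive integer n is k-layered and w is a positive integer relatively prime to n, then n·w is k-layered. -/
/-!
Every divisor of `n * w` is uniquely `a * b` with `a ∣ n` and `b ∣ w`. Give it the color of its
`n`-part `a = gcd (a * b) n`; this multiplies the sum of each color class by the sum of the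
divisors of `w`, so equal sums stay equal.
-/

section CoprimeDivisors

variable {m n : ℕ}

theorem sum_divisors_mul_eq_sum_sum {M : Type*} [AddCommMonoid M] (hmn : m.Coprime n)
    (f : ℕ → M) :
    ∑ d ∈ (m * n).divisors, f d = ∑ a ∈ m.divisors, ∑ b ∈ n.divisors, f (a * b) := by
  rw [Nat.divisors_mul, Finset.mul_def, Finset.sum_image hmn.mul_injOn_divisors,
    Finset.sum_product]

theorem sum_divisors_mul_filter_gcd_eq_sum_sum {M : Type*} [AddCommMonoid M]
    (hmn : m.Coprime n) (p : ℕ → Prop) [DecidablePred p] (f : ℕ → M) :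
    ∑ d ∈ (m * n).divisors with p (d.gcd m), f d =
      ∑ a ∈ m.divisors with p a, ∑ b ∈ n.divisors, f (a * b) := by
  rw [Finset.sum_filter, sum_divisors_mul_eq_sum_sum hmn, Finset.sum_filter]
  refine Finset.sum_congr rfl fun a ha ↦ ?_
  have gcd_eq (b : ℕ) (hb : b ∈ n.divisors) : (a * b).gcd m = a := by
    have hbm : b.Coprime m := hmn.symm.coprime_dvd_left (Nat.dvd_of_mem_divisors hb)
    rw [mul_comm, Nat.gcd_mul_of_coprime_of_dvd hbm (Nat.dvd_of_mem_divisors ha)]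
  calc
    ∑ b ∈ n.divisors, (if p ((a * b).gcd m) then f (a * b) else 0)
    _ = ∑ b ∈ n.divisors, (if p a then f (a * b) else 0) :=
      Finset.sum_congr rfl fun b hb ↦ by rw [gcd_eq b hb]
    _ = if p a then ∑ b ∈ n.divisors, f (a * b) else 0 := by
      split_ifs
      · rfl
      · exact Finset.sum_const_zero

theorem sum_divisors_mul_filter_gcd_eq_mul {R : Type*} [NonUnitalNonAssocSemiring R]
    (hmn : m.Coprime n) (p : ℕ → Prop) [DecidablePred p] (f : ℕ →ₙ* R) :
    ∑ d ∈ (m * n).divisors with p (d.gcd m), f d =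
      (∑ a ∈ m.divisors with p a, f a) * ∑ b ∈ n.divisors, f b := by
  simp only [sum_divisors_mul_filter_gcd_eq_sum_sum hmn, map_mul, Finset.sum_mul_sum]

end CoprimeDivisors

/-- If a positive integer `n` is `k`-layered and `w` is a positive integer relatively
prime to `n`, then `n * w` is `k`-layered. -/
theorem layered_mul_coprime (n k w : ℕ) (hn : 0 < n) (hw : 0 < w)
    (h : IsKLayered n k) (hcop : Nat.Coprime n w) :
    IsKLayered (n * w) k := by
  obtain ⟨c, hc⟩ := h
  have sum_color (i : Fin k) :
      ∑ d ∈ (n * w).divisors with c (d.gcd n) = i, d =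
        (∑ a ∈ n.divisors with c a = i, a) * ∑ b ∈ w.divisors, b :=
    sum_divisors_mul_filter_gcd_eq_mul hcop (c · = i) (MulHom.id ℕ)
  refine ⟨fun d ↦ c (d.gcd n), fun i j ↦ ?_⟩
  rw [sum_color i, sum_color j, hc i j]
end

section
/- Let m and n be positive integers with gcd(m, n) = 1. If m is k-layered and n is k'-layered, then m·n is (k·k')-layered. -/
/-!
For coprime `m` and `n`, every divisor of `m * n` is uniquely a product of a divisor of `m` and a
divisor of `n`, and these factors are its gcds with `m` and `n`. Colour a divisor of `m * n` by the
pair of colours of its two factors: by distributivity, the sum of the colour class `(i, j)` is the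
product of the sums of the colour classes `i` of `m` and `j` of `n`, which depends on neither `i`
nor `j`.
-/

section CoprimeDivisors

variable {m n : ℕ}

theorem gcd_mul_left_of_coprime_of_dvd {x y : ℕ} (hmn : m.Coprime n) (hx : x ∣ m) (hy : y ∣ n) :
    (x * y).gcd m = x := by
  rw [mul_comm]
  exact Nat.gcd_mul_of_coprime_of_dvd (hmn.symm.coprime_dvd_left hy) hx

theorem gcd_mul_right_of_coprime_of_dvd {x y : ℕ} (hmn : m.Coprime n) (hx : x ∣ m) (hy : y ∣ n) :
    (x * y).gcd n = y :=
  Nat.gcd_mul_of_coprime_of_dvd (hmn.coprime_dvd_left hx) hy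

theorem sum_divisors_mul_of_coprime {M : Type*} [AddCommMonoid M] (hmn : m.Coprime n)
    (f : ℕ → M) :
    ∑ d ∈ (m * n).divisors, f d = ∑ x ∈ m.divisors, ∑ y ∈ n.divisors, f (x * y) := by
  rw [Nat.divisors_mul, Finset.mul_def, Finset.sum_image hmn.mul_injOn_divisors,
    Finset.sum_product]

theorem sum_divisors_mul_gcd_mul_gcd {R : Type*} [NonUnitalNonAssocSemiring R]
    (hmn : m.Coprime n) (f g : ℕ → R) :
    ∑ d ∈ (m * n).divisors, f (d.gcd m) * g (d.gcd n) =
      (∑ x ∈ m.divisors, f x) * ∑ y ∈ n.divisors, g y := by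
  rw [sum_divisors_mul_of_coprime hmn, Finset.sum_mul_sum]
  refine Finset.sum_congr rfl fun x hx => Finset.sum_congr rfl fun y hy => ?_
  have hxm := Nat.dvd_of_mem_divisors hx
  have hyn := Nat.dvd_of_mem_divisors hy
  rw [gcd_mul_left_of_coprime_of_dvd hmn hxm hyn, gcd_mul_right_of_coprime_of_dvd hmn hxm hyn]

theorem sum_divisors_mul_filter_gcd (hmn : m.Coprime n) (p q : ℕ → Prop)
    [DecidablePred p] [DecidablePred q] :
    ∑ d ∈ (m * n).divisors with p (d.gcd m) ∧ q (d.gcd n), d =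
      (∑ x ∈ m.divisors with p x, x) * ∑ y ∈ n.divisors with q y, y := by
  simp only [Finset.sum_filter]
  rw [← sum_divisors_mul_gcd_mul_gcd hmn]
  refine Finset.sum_congr rfl fun d hd => ?_
  have gcd_mul_gcd : d.gcd m * d.gcd n = d :=
    (Nat.gcd_mul_gcd_eq_iff_dvd_mul_of_coprime hmn).2 (Nat.dvd_of_mem_divisors hd)
  rw [ite_zero_mul_ite_zero, gcd_mul_gcd]

end CoprimeDivisors

/-- If `m` is `k`-layered, `n` is `k'`-layered and `gcd(m, n) = 1`,
then `m * n` is `(k * k')`-layered. -/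
theorem layered_mul_layered (m n k k' : ℕ) (hm : 0 < m) (hn : 0 < n)
    (hcop : Nat.Coprime m n) (h1 : IsKLayered m k) (h2 : IsKLayered n k') :
    IsKLayered (m * n) (k * k') := by
  obtain ⟨c, hc⟩ := h1
  obtain ⟨c', hc'⟩ := h2
  let color (d : ℕ) : Fin (k * k') := finProdFinEquiv (c (d.gcd m), c' (d.gcd n))
  have sum_color (i : Fin k) (j : Fin k') :
      ∑ d ∈ (m * n).divisors with color d = finProdFinEquiv (i, j), d =
        (∑ x ∈ m.divisors with c x = i, x) * ∑ y ∈ n.divisors with c' y = j, y := by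
    simp only [color, EmbeddingLike.apply_eq_iff_eq, Prod.mk.injEq]
    exact sum_divisors_mul_filter_gcd hcop (c · = i) (c' · = j)
  refine ⟨color, finProdFinEquiv.surjective.forall₂.2 ?_⟩
  rintro ⟨i₁, j₁⟩ ⟨i₂, j₂⟩
  rw [sum_color, sum_color, hc i₁ i₂, hc' j₁ j₂]
end

section
/- Let n ≠ 3 be an almost practical number. Then n is a Zumkeller number if and only if σ(n) is even. -/
/-- A positive integer `n` is almost practical if every integer `j` with
`2 < j < σ(n) - 2` can be written as a sum of distinct positive divisors of `n`. -/
def AlmostPractical (n : ℕ) : Prop :=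
  ∀ j : ℕ, 2 < j → j + 2 < ∑ d ∈ n.divisors, d →
    ∃ S ⊆ n.divisors, ∑ d ∈ S, d = j

theorem IsKLayered.dvd_sum_divisors_s4 {n k : ℕ} (h : IsKLayered n k) :
    k ∣ ∑ d ∈ n.divisors, d := by
  obtain ⟨c, hc⟩ := h
  refine ⟨∑ d ∈ n.divisors with c d = c 0, d, ?_⟩
  calc ∑ d ∈ n.divisors, d
      = ∑ i, ∑ d ∈ n.divisors with c d = i, d := (Finset.sum_fiberwise _ c _).symm
    _ = ∑ _i : Fin k, ∑ d ∈ n.divisors with c d = c 0, d :=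
        Finset.sum_congr rfl fun i _ => hc i (c 0)
    _ = k * ∑ d ∈ n.divisors with c d = c 0, d := by
        rw [Finset.sum_const, Finset.card_fin, smul_eq_mul]

theorem isKLayered_two_of_two_mul_sum_eq {n : ℕ} {S : Finset ℕ} (hS : S ⊆ n.divisors)
    (hsum : 2 * ∑ d ∈ S, d = ∑ d ∈ n.divisors, d) : IsKLayered n 2 := by
  have sum_compl : ∑ d ∈ n.divisors \ S, d = ∑ d ∈ S, d := by
    have := Finset.sum_sdiff hS (f := fun d => d)
    omega
  have fiber_zero : {d ∈ n.divisors | (if d ∈ S then 0 else 1 : Fin 2) = 0} = S := by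
    simpa [Finset.filter_mem_eq_inter] using hS
  have fiber_one : {d ∈ n.divisors | (if d ∈ S then 0 else 1 : Fin 2) = 1} = n.divisors \ S := by
    simp [Finset.filter_notMem_eq_sdiff]
  refine ⟨fun d => if d ∈ S then 0 else 1, ?_⟩
  simp only [Fin.forall_fin_two, fiber_zero, fiber_one, sum_compl, and_self]

theorem add_one_le_sum_divisors {n : ℕ} (hn : 1 < n) : n + 1 ≤ ∑ d ∈ n.divisors, d :=
  calc n + 1 = ∑ d ∈ {n, 1}, d := (Finset.sum_pair (f := fun d => d) hn.ne').symm
    _ ≤ ∑ d ∈ n.divisors, d := Finset.sum_le_sum_of_subset <| by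
        simp [Finset.insert_subset_iff, Nat.ne_zero_of_lt hn]

theorem four_lt_sum_divisors_of_even {n : ℕ} (hn : 0 < n) (hn3 : n ≠ 3)
    (heven : Even (∑ d ∈ n.divisors, d)) : 4 < ∑ d ∈ n.divisors, d := by
  have hn1 : n ≠ 1 := by rintro rfl; exact absurd heven (by decide)
  have hn2 : n ≠ 2 := by rintro rfl; exact absurd heven (by decide)
  have := add_one_le_sum_divisors (n := n) (by omega)
  omega

theorem AlmostPractical.isKLayered_two {n : ℕ} (hap : AlmostPractical n)
    (hlarge : 4 < ∑ d ∈ n.divisors, d) (heven : Even (∑ d ∈ n.divisors, d)) :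
    IsKLayered n 2 := by
  obtain ⟨m, hm⟩ := heven
  obtain ⟨S, hS, hsum⟩ := hap m (by omega) (by omega)
  exact isKLayered_two_of_two_mul_sum_eq hS (by omega)

/-- Let `n ≠ 3` be an almost practical number. Then `n` is a Zumkeller number
(i.e., 2-layered) if and only if `σ(n)` is even. -/
theorem almostPractical_zumkeller_iff (n : ℕ) (hn : 0 < n) (hn3 : n ≠ 3)
    (hap : AlmostPractical n) :
    IsKLayered n 2 ↔ Even (∑ d ∈ n.divisors, d) :=
  ⟨fun h => even_iff_two_dvd.mpr h.dvd_sum_divisors_s4,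
    fun heven => hap.isKLayered_two (four_lt_sum_divisors_of_even hn hn3 heven) heven⟩
end

section
/- Let α be a positive integer, let n be a positive integer that is not k-layered, and let p be a prime with gcd(n, p) = 1. If n·p^α is k-layered, then p ≤ σ(n). Moreover, if q is a prime factor of k such that q does not divide σ(n), then q divides σ(p^α). -/
/-!
Multiplying `n` by a power of `p` only adds divisors that are multiples of `p`, so a coloring of the
divisors of `n * p ^ α` with equal class sums restricts to a coloring of the divisors of `n` whose
class sums agree modulo `p`. These sums are at most `σ(n)`; if `σ(n) < p` they are therefore equal,
and `n` is `k`-layered.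

For the second claim, the `k` equal class sums add up to `σ(n * p ^ α) = σ(n) * σ(p ^ α)`, which is
therefore divisible by `k` and by each of its prime factors.
-/

open Finset

lemma filter_not_dvd_divisors_mul_prime_pow {p : ℕ} (hp : p.Prime) (n α : ℕ) :
    {d ∈ (n * p ^ α).divisors | ¬ p ∣ d} = {d ∈ n.divisors | ¬ p ∣ d} := by
  ext d
  simp only [mem_filter, Nat.mem_divisors]
  refine and_congr_left fun hpd => and_congr ?_ ?_
  · have hd : Nat.Coprime d (p ^ α) := (hp.coprime_iff_not_dvd.2 hpd).symm.pow_right α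
    exact hd.dvd_mul_right
  · simp [hp.ne_zero]

lemma sum_filter_not_dvd_modEq {ι : Type*} (s : Finset ι) (f : ι → ℕ) (m : ℕ) :
    ∑ i ∈ s with ¬ m ∣ f i, f i ≡ ∑ i ∈ s, f i [MOD m] := by
  rw [← sum_filter_add_sum_filter_not s (m ∣ f ·), Nat.right_modEq_add_iff]
  exact dvd_sum fun i hi => (mem_filter.1 hi).2

lemma sum_filter_divisors_mul_prime_pow_modEq {p : ℕ} (hp : p.Prime) (n α : ℕ)
    (P : ℕ → Prop) [DecidablePred P] :
    ∑ d ∈ (n * p ^ α).divisors with P d, d ≡ ∑ d ∈ n.divisors with P d, d [MOD p] := by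
  have filter_eq : {d ∈ {d ∈ (n * p ^ α).divisors | P d} | ¬ p ∣ d} =
      {d ∈ {d ∈ n.divisors | P d} | ¬ p ∣ d} := by
    rw [filter_comm, filter_not_dvd_divisors_mul_prime_pow hp, filter_comm]
  calc ∑ d ∈ (n * p ^ α).divisors with P d, d
    _ ≡ ∑ d ∈ {d ∈ (n * p ^ α).divisors | P d} with ¬ p ∣ d, d [MOD p] :=
      (sum_filter_not_dvd_modEq _ (fun d => d) p).symm
    _ ≡ ∑ d ∈ n.divisors with P d, d [MOD p] :=
      filter_eq ▸ sum_filter_not_dvd_modEq _ (fun d => d) p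

namespace IsKLayered

variable {n k : ℕ}

theorem of_mul_prime_pow {p α : ℕ} (hp : p.Prime) (hlt : ∑ d ∈ n.divisors, d < p)
    (h : IsKLayered (n * p ^ α) k) : IsKLayered n k := by
  obtain ⟨c, hc⟩ := h
  refine ⟨c, fun i j => ?_⟩
  have class_lt (i : Fin k) : ∑ d ∈ n.divisors with c d = i, d < p :=
    (sum_le_sum_of_subset (filter_subset _ _)).trans_lt hlt
  have class_modEq (i : Fin k) :
      ∑ d ∈ (n * p ^ α).divisors with c d = i, d ≡ ∑ d ∈ n.divisors with c d = i, d [MOD p] :=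
    sum_filter_divisors_mul_prime_pow_modEq hp n α (c · = i)
  have hmod := (class_modEq i).symm.trans (hc i j ▸ class_modEq j)
  exact hmod.eq_of_lt_of_lt (class_lt i) (class_lt j)

theorem prime_dvd_sum_divisors_of_mul {m q : ℕ} (h : IsKLayered (n * m) k) (hnm : n.Coprime m)
    (hq : q.Prime) (hqk : q ∣ k) (hqn : ¬ q ∣ ∑ d ∈ n.divisors, d) :
    q ∣ ∑ d ∈ m.divisors, d := by
  have hdvd : q ∣ (∑ d ∈ n.divisors, d) * ∑ d ∈ m.divisors, d :=
    hnm.sum_divisors_mul ▸ hqk.trans h.dvd_sum_divisors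
  exact (hq.dvd_mul.1 hdvd).resolve_left hqn

end IsKLayered

/-- Let `α ≥ 1`, let `n` be a positive integer that is not `k`-layered and `p` a prime
coprime to `n`. If `n * p ^ α` is `k`-layered, then `p ≤ σ(n)`; moreover every prime
factor `q` of `k` not dividing `σ(n)` divides `σ(p ^ α)`. -/
theorem layered_prime_power_mul (n k p α : ℕ) (hn : 0 < n) (hα : 0 < α)
    (hp : p.Prime) (hcop : Nat.Coprime n p) (hnk : ¬ IsKLayered n k)
    (h : IsKLayered (n * p ^ α) k) :
    p ≤ (∑ d ∈ n.divisors, d) ∧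
    ∀ q : ℕ, q.Prime → q ∣ k → ¬ q ∣ (∑ d ∈ n.divisors, d) →
      q ∣ (∑ d ∈ (p ^ α).divisors, d) :=
  ⟨not_lt.1 fun hlt => hnk (h.of_mul_prime_pow hp hlt),
    fun _ hq hqk hqn => h.prime_dvd_sum_divisors_of_mul (hcop.pow_right α) hq hqk hqn⟩
end

section
/- The number 120 is the smallest 3-layered number: 120 is 3-layered and no positive integer m < 120 is 3-layered. -/
/-! The class containing `n` itself has sum at least `n`, so a `k`-layered number satisfies
`k * n ≤ σ 1 n`; inspecting the values of `σ 1` shows that no positive integer below `120`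
satisfies this for `k = 3`. On the other hand `σ 1 120 = 3 * 120`, so `{120}`, `{20, 40, 60}` and
the remaining divisors have equal sums. -/

open scoped ArithmeticFunction.sigma

theorem isKLayered_iff_mul_sum_eq_sigma_one {n k : ℕ} :
    IsKLayered n k ↔
      ∃ c : ℕ → Fin k, ∀ i, k * ∑ d ∈ n.divisors with c d = i, d = σ 1 n := by
  refine exists_congr fun c ↦ ⟨fun h i ↦ ?_, fun h i j ↦ ?_⟩
  · calc
      k * ∑ d ∈ n.divisors with c d = i, d = ∑ _j : Fin k, ∑ d ∈ n.divisors with c d = i, d := by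
        rw [Fin.sum_const, smul_eq_mul]
      _ = ∑ j, ∑ d ∈ n.divisors with c d = j, d := Finset.sum_congr rfl fun j _ ↦ h i j
      _ = ∑ d ∈ n.divisors, d := Finset.sum_fiberwise _ c _
      _ = σ 1 n := (ArithmeticFunction.sigma_one_apply n).symm
  · exact Nat.eq_of_mul_eq_mul_left i.pos ((h i).trans (h j).symm)

theorem IsKLayered.mul_le_sigma_one {n k : ℕ} (h : IsKLayered n k) : k * n ≤ σ 1 n := by
  obtain rfl | hn := eq_or_ne n 0
  · simp
  obtain ⟨c, hc⟩ := isKLayered_iff_mul_sum_eq_sigma_one.mp h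
  have hmem : n ∈ {d ∈ n.divisors | c d = c n} := by simp [hn]
  rw [← hc (c n)]
  gcongr
  exact Finset.single_le_sum (f := fun d ↦ d) (fun _ _ ↦ Nat.zero_le _) hmem

theorem isKLayered_three_of_disjoint {n : ℕ} {s t : Finset ℕ} (hs : s ⊆ n.divisors)
    (ht : t ⊆ n.divisors) (hst : Disjoint s t) (hs_sum : 3 * ∑ d ∈ s, d = σ 1 n)
    (ht_sum : 3 * ∑ d ∈ t, d = σ 1 n) : IsKLayered n 3 := by
  let c (d : ℕ) : Fin 3 := if d ∈ s then 0 else if d ∈ t then 1 else 2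
  have fiber_zero : {d ∈ n.divisors | c d = 0} = s := by
    ext d
    grind
  have fiber_one : {d ∈ n.divisors | c d = 1} = t := by
    ext d
    grind [Finset.disjoint_left]
  have total := Finset.sum_fiberwise n.divisors c id
  simp only [id, Fin.sum_univ_three, fiber_zero, fiber_one,
    ← ArithmeticFunction.sigma_one_apply] at total
  refine isKLayered_iff_mul_sum_eq_sigma_one.mpr ⟨c, fun i ↦ ?_⟩
  match i with
  | 0 => rwa [fiber_zero]
  | 1 => rwa [fiber_one]
  | 2 => omega

theorem isKLayered_three_of_pseudoperfect {n : ℕ} (hn : n.Pseudoperfect)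
    (hσ : σ 1 n = 3 * n) : IsKLayered n 3 := by
  obtain ⟨hpos, s, hs, hsum⟩ := hn
  have hself : {n} ⊆ n.divisors :=
    Finset.singleton_subset_iff.mpr (Nat.mem_divisors_self n hpos.ne')
  have hdisj : Disjoint {n} s :=
    Finset.disjoint_singleton_left.mpr fun h ↦ Nat.self_notMem_properDivisors (hs h)
  exact isKLayered_three_of_disjoint hself (hs.trans Nat.properDivisors_subset_divisors) hdisj
    (by rw [Finset.sum_singleton, hσ]) (by rw [hsum, hσ])

theorem pseudoperfect_120 : Nat.Pseudoperfect 120 :=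
  ⟨by norm_num, {20, 40, 60}, by decide, by decide⟩

theorem sigma_one_120 : σ 1 120 = 3 * 120 := by
  decide +kernel

theorem sigma_one_lt_three_mul_of_lt_120 {n : ℕ} (hpos : 0 < n) (hlt : n < 120) :
    σ 1 n < 3 * n := by
  have check : ∀ m < 120, 0 < m → σ 1 m < 3 * m := by decide +kernel
  exact check n hlt hpos

/-- `120` is the smallest `3`-layered number. -/
theorem smallest_three_layered :
    IsKLayered 120 3 ∧ ∀ m : ℕ, 0 < m → m < 120 → ¬ IsKLayered m 3 :=
  ⟨isKLayered_three_of_pseudoperfect pseudoperfect_120 sigma_one_120,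
    fun _ hpos hlt h ↦ (sigma_one_lt_three_mul_of_lt_120 hpos hlt).not_ge h.mul_le_sigma_one⟩
end

section
/- The number 27720 is the smallest 4-layered number: 27720 is 4-layered and no positive integer m < 27720 is 4-layered. -/
/-!
The part containing `n` has sum at least `n`, so a `4`-layered number satisfies `σ(n) ≥ 4n`.
Replacing the `i`-th smallest prime factor of `n` by the `i`-th prime, with the same exponent,
decreases `n` and increases `σ(n) / n`. It therefore suffices to bound `σ(n) / n` for those
`n < 27720` whose prime factors form an initial segment of the primes. Such an `n` is not divisible
by `13`, as otherwise `2 · 3 · 5 · 7 · 11 · 13 = 30030` would divide it, so it is one of finitely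
many products `2 ^ a * 3 ^ b * 5 ^ c * 7 ^ d * 11 ^ e`.
-/

open Finset

lemma IsKLayered.mul_le_sum_divisors_s9 {n k : ℕ} (h : IsKLayered n k) :
    k * n ≤ ∑ d ∈ n.divisors, d := by
  obtain ⟨c, hc⟩ := h
  rcases eq_or_ne n 0 with rfl | hn
  · simp
  have le_part : n ≤ ∑ d ∈ n.divisors with c d = c n, d :=
    single_le_sum (f := fun d => d) (fun _ _ => Nat.zero_le _) (by simp [hn])
  calc k * n ≤ k * ∑ d ∈ n.divisors with c d = c n, d := Nat.mul_le_mul_left k le_part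
    _ = ∑ i : Fin k, ∑ d ∈ n.divisors with c d = i, d := by simp [fun i => hc i (c n)]
    _ = ∑ d ∈ n.divisors, d := sum_fiberwise _ _ _

lemma IsKLayered.le_abundancyIndex {n k : ℕ} (hn : n ≠ 0) (h : IsKLayered n k) :
    k ≤ n.abundancyIndex := by
  rw [Nat.abundancyIndex, le_div_iff₀ (by positivity)]
  exact_mod_cast h.mul_le_sum_divisors_s9

lemma geom_sum_div_pow {K : Type*} [Field K] {x : K} (hx : x ≠ 0) (n : ℕ) :
    (∑ i ∈ range (n + 1), x ^ i) / x ^ n = ∑ i ∈ range (n + 1), x⁻¹ ^ i := by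
  rw [sum_div, ← sum_range_reflect]
  refine sum_congr rfl fun i hi => ?_
  have hin : i ≤ n := Nat.lt_succ_iff.1 (mem_range.1 hi)
  rw [Nat.add_sub_cancel, pow_sub₀ x hx hin, inv_pow]
  field_simp

lemma abundancyIndex_eq_prod_geom_sum {n : ℕ} (hn : n ≠ 0) :
    n.abundancyIndex =
      ∏ p ∈ n.primeFactors, ∑ i ∈ range (n.factorization p + 1), (p : ℚ)⁻¹ ^ i := by
  have hn_prod : (n : ℚ) = ∏ p ∈ n.primeFactors, (p : ℚ) ^ n.factorization p :=
    mod_cast Nat.prod_primeFactors_pow_factorization hn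
  rw [Nat.abundancyIndex, Nat.sum_divisors hn, hn_prod]
  push_cast
  rw [← prod_div_distrib]
  refine prod_congr rfl fun p hp => geom_sum_div_pow ?_ _
  exact_mod_cast (Nat.prime_of_mem_primeFactors hp).ne_zero

/-- The prime replacing `q` in `primeCompression n`: the `i`-th prime if `q` is the `i`-th smallest
prime factor of `n`, and a junk value if `q` is not a prime factor of `n`. -/
noncomputable def compressPrime (n q : ℕ) : ℕ :=
  Nat.nth Nat.Prime (Nat.count (· ∈ n.primeFactors) q)

/-- The number obtained from `n` by replacing its `i`-th smallest prime factor by the `i`-th prime,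
keeping the exponent. -/
noncomputable def primeCompression (n : ℕ) : ℕ :=
  (n.factorization.mapDomain (compressPrime n)).prod (· ^ ·)

section Compression

variable {n : ℕ}

lemma prime_compressPrime (n q : ℕ) : (compressPrime n q).Prime :=
  Nat.prime_nth_prime _

lemma compressPrime_le {q : ℕ} (hq : q.Prime) : compressPrime n q ≤ q :=
  calc compressPrime n q ≤ Nat.nth Nat.Prime (Nat.count Nat.Prime q) :=
        Nat.nth_monotone Nat.infinite_setOfPred_prime
          (Nat.count_mono_left fun _ _ => Nat.prime_of_mem_primeFactors)
    _ = q := Nat.nth_count hq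

lemma injOn_compressPrime : Set.InjOn (compressPrime n) n.primeFactors := fun _ hp _ hq h =>
  Nat.count_injective hp hq (Nat.nth_injective Nat.infinite_setOfPred_prime h)

lemma image_compressPrime :
    n.primeFactors.image (compressPrime n) = (range #n.primeFactors).image (Nat.nth Nat.Prime) := by
  have count_lt {q : ℕ} (hq : q ∈ n.primeFactors) :
      Nat.count (· ∈ n.primeFactors) q < #n.primeFactors := by
    exact (Nat.count_lt_card n.primeFactors.finite_toSet hq).trans_eq
      (congrArg card n.primeFactors.finite_toSet_toFinset)
  refine eq_of_subset_of_card_le (image_subset_iff.2 fun q hq => ?_) ?_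
  · exact mem_image_of_mem _ (mem_range.2 (count_lt hq))
  · rw [card_image_of_injOn injOn_compressPrime]
    exact card_image_le.trans_eq (card_range _)

lemma support_mapDomain_compressPrime :
    (n.factorization.mapDomain (compressPrime n)).support =
      n.primeFactors.image (compressPrime n) :=
  Finsupp.mapDomain_support_of_injOn _ injOn_compressPrime

lemma factorization_primeCompression :
    (primeCompression n).factorization = n.factorization.mapDomain (compressPrime n) := by
  refine Nat.prod_pow_factorization_eq_self fun p hp => ?_
  rw [support_mapDomain_compressPrime] at hp
  obtain ⟨q, -, rfl⟩ := mem_image.1 hp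
  exact prime_compressPrime n q

lemma primeFactors_primeCompression :
    (primeCompression n).primeFactors = n.primeFactors.image (compressPrime n) := by
  rw [← Nat.support_factorization, factorization_primeCompression, support_mapDomain_compressPrime]

lemma factorization_primeCompression_compressPrime {q : ℕ} (hq : q ∈ n.primeFactors) :
    (primeCompression n).factorization (compressPrime n q) = n.factorization q := by
  rw [factorization_primeCompression]
  exact Finsupp.mapDomain_apply' n.primeFactors _ subset_rfl injOn_compressPrime hq

lemma primeCompression_eq_prod :
    primeCompression n = ∏ q ∈ n.primeFactors, compressPrime n q ^ n.factorization q :=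
  Finsupp.prod_mapDomain_index pow_zero pow_add

lemma primeCompression_ne_zero : primeCompression n ≠ 0 := by
  rw [primeCompression_eq_prod]
  exact prod_ne_zero_iff.2 fun q _ => pow_ne_zero _ (prime_compressPrime n q).ne_zero

lemma primeCompression_le (hn : n ≠ 0) : primeCompression n ≤ n :=
  calc primeCompression n = ∏ q ∈ n.primeFactors, compressPrime n q ^ n.factorization q :=
        primeCompression_eq_prod
    _ ≤ ∏ q ∈ n.primeFactors, q ^ n.factorization q :=
        prod_le_prod' fun _ hq =>
          Nat.pow_le_pow_left (compressPrime_le (Nat.prime_of_mem_primeFactors hq)) _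
    _ = n := (Nat.prod_primeFactors_pow_factorization hn).symm

lemma abundancyIndex_le_abundancyIndex_primeCompression (hn : n ≠ 0) :
    n.abundancyIndex ≤ (primeCompression n).abundancyIndex := by
  rw [abundancyIndex_eq_prod_geom_sum hn, abundancyIndex_eq_prod_geom_sum primeCompression_ne_zero,
    primeFactors_primeCompression, prod_image injOn_compressPrime]
  refine prod_le_prod (fun _ _ => by positivity) fun q hq => ?_
  rw [factorization_primeCompression_compressPrime hq]
  have compressed_pos : (0 : ℚ) < compressPrime n q := mod_cast (prime_compressPrime n q).pos
  have compressed_le : (compressPrime n q : ℚ) ≤ q :=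
    mod_cast compressPrime_le (Nat.prime_of_mem_primeFactors hq)
  gcongr

lemma dvd_primeCompression_of_le {p q : ℕ} (hp : p.Prime) (hpq : p ≤ q)
    (hq : q ∈ (primeCompression n).primeFactors) : p ∣ primeCompression n := by
  rw [primeFactors_primeCompression, image_compressPrime] at hq
  obtain ⟨j, hj, rfl⟩ := mem_image.1 hq
  have count_le : Nat.count Nat.Prime p ≤ j := Nat.le_nth_of_count_le hpq
  refine Nat.dvd_of_mem_primeFactors ?_
  rw [primeFactors_primeCompression, image_compressPrime, ← Nat.nth_count hp]
  exact mem_image_of_mem _ (mem_range.2 (count_le.trans_lt (mem_range.1 hj)))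

lemma primorial_dvd_primeCompression {q : ℕ} (hq : q ∈ (primeCompression n).primeFactors) :
    primorial q ∣ primeCompression n := by
  refine prod_primes_dvd _ (fun p hp => (mem_filter.1 hp).2.prime) fun p hp => ?_
  obtain ⟨hpq, hp⟩ := mem_filter.1 hp
  exact dvd_primeCompression_of_le hp (Nat.lt_succ_iff.1 (mem_range.1 hpq)) hq

lemma primeFactors_primeCompression_subset_primesBelow {q : ℕ} (hn : n ≠ 0)
    (hlt : n < primorial q) : (primeCompression n).primeFactors ⊆ q.primesBelow := by
  intro p hp
  refine Nat.mem_primesBelow.2 ⟨?_, Nat.prime_of_mem_primeFactors hp⟩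
  by_contra! hqp
  refine hlt.not_ge ?_
  calc primorial q ≤ primorial p := primorial_mono hqp
    _ ≤ primeCompression n :=
      Nat.le_of_dvd primeCompression_ne_zero.bot_lt (primorial_dvd_primeCompression hp)
    _ ≤ n := primeCompression_le hn

end Compression

lemma prod_geom_sum_lt_four_mul :
    ∀ a ∈ range 15, ∀ b ∈ range 10, ∀ c ∈ range 7, ∀ d ∈ range 6, ∀ e ∈ range 5,
      2 ^ a * 3 ^ b * 5 ^ c * 7 ^ d * 11 ^ e < 27720 →
        (∑ i ∈ range (a + 1), 2 ^ i) * (∑ i ∈ range (b + 1), 3 ^ i) *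
          (∑ i ∈ range (c + 1), 5 ^ i) * (∑ i ∈ range (d + 1), 7 ^ i) *
          (∑ i ∈ range (e + 1), 11 ^ i) < 4 * (2 ^ a * 3 ^ b * 5 ^ c * 7 ^ d * 11 ^ e) := by
  decide +kernel

lemma abundancyIndex_lt_four_of_primeFactors_subset {n : ℕ} (hn : n ≠ 0) (hlt : n < 27720)
    (hS : n.primeFactors ⊆ Nat.primesBelow 13) : n.abundancyIndex < 4 := by
  rw [show Nat.primesBelow 13 = {2, 3, 5, 7, 11} by decide] at hS
  set v := n.factorization
  have hn_prod : n = 2 ^ v 2 * 3 ^ v 3 * 5 ^ v 5 * 7 ^ v 7 * 11 ^ v 11 :=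
    calc n = v.prod (· ^ ·) := (Nat.prod_factorization_pow_eq_self hn).symm
      _ = ∏ p ∈ {2, 3, 5, 7, 11}, p ^ v p := v.prod_of_support_subset hS _ fun _ _ => pow_zero _
      _ = _ := by simp [mul_assoc]
  have sum_divisors_eq : ∑ d ∈ n.divisors, d =
      (∑ i ∈ range (v 2 + 1), 2 ^ i) * (∑ i ∈ range (v 3 + 1), 3 ^ i) *
        (∑ i ∈ range (v 5 + 1), 5 ^ i) * (∑ i ∈ range (v 7 + 1), 7 ^ i) *
        (∑ i ∈ range (v 11 + 1), 11 ^ i) :=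
    calc ∑ d ∈ n.divisors, d = v.prod fun p a => ∑ i ∈ range (a + 1), p ^ i := Nat.sum_divisors hn
      _ = ∏ p ∈ {2, 3, 5, 7, 11}, ∑ i ∈ range (v p + 1), p ^ i :=
        v.prod_of_support_subset hS _ fun _ _ => by simp
      _ = _ := by simp [mul_assoc]
  have exponent_mem_range {p a : ℕ} (hp : 1 < p) (ha : 27720 ≤ p ^ a) : v p ∈ range a :=
    mem_range.2 <| (Nat.pow_lt_pow_iff_right hp).1 <|
      ((Nat.ordProj_le p hn).trans_lt hlt).trans_le ha
  have sum_divisors_lt : ∑ d ∈ n.divisors, d < 4 * n := by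
    rw [sum_divisors_eq, hn_prod]
    exact prod_geom_sum_lt_four_mul
      (v 2) (exponent_mem_range (by norm_num) (by norm_num))
      (v 3) (exponent_mem_range (by norm_num) (by norm_num))
      (v 5) (exponent_mem_range (by norm_num) (by norm_num))
      (v 7) (exponent_mem_range (by norm_num) (by norm_num))
      (v 11) (exponent_mem_range (by norm_num) (by norm_num))
      (hn_prod ▸ hlt)
  rw [Nat.abundancyIndex, div_lt_iff₀ (by positivity)]
  exact_mod_cast sum_divisors_lt

lemma abundancyIndex_lt_four {n : ℕ} (hn : n ≠ 0) (hlt : n < 27720) : n.abundancyIndex < 4 := by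
  have lt_primorial : n < primorial 13 := hlt.trans (by decide)
  calc n.abundancyIndex ≤ (primeCompression n).abundancyIndex :=
        abundancyIndex_le_abundancyIndex_primeCompression hn
    _ < 4 :=
        abundancyIndex_lt_four_of_primeFactors_subset primeCompression_ne_zero
          ((primeCompression_le hn).trans_lt hlt)
          (primeFactors_primeCompression_subset_primesBelow hn lt_primorial)

/-- A coloring of the divisors of `27720` whose four classes have the same sum. -/
def layerColor : ℕ → Fin 4
  | 27720 | 360 => 0
  | 13860 | 630 | 840 | 1320 | 1980 | 2520 | 6930 => 1
  | 9240 | 420 | 990 | 1260 | 1540 | 1848 | 2310 | 2772 | 3080 | 4620 => 2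
  | _ => 3

lemma sum_divisors_layerColor : ∀ i, ∑ d ∈ Nat.divisors 27720 with layerColor d = i, d = 28080 := by
  decide +kernel

/-- `27720` is the smallest `4`-layered number. -/
theorem smallest_four_layered :
    IsKLayered 27720 4 ∧ ∀ m : ℕ, 0 < m → m < 27720 → ¬ IsKLayered m 4 := by
  refine ⟨⟨layerColor, fun i j => ?_⟩, fun m hm hlt h => ?_⟩
  · rw [sum_divisors_layerColor, sum_divisors_layerColor]
  · exact (abundancyIndex_lt_four hm.ne' hlt).not_ge (mod_cast h.le_abundancyIndex hm.ne')
end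

section
/- Let α be a positive integer and let m be an odd positive integer. If n = 2^α·m is a good k-layered number (that is, 2^β·n is k-layered for every positive integer β, and n itself is k-layered), then k divides σ(m). -/
open scoped ArithmeticFunction.sigma

theorem card_dvd_sum_of_sum_fiber_eq {α ι R : Type*} [Fintype ι] [DecidableEq ι] [Semiring R]
    (s : Finset α) (c : α → ι) (f : α → R)
    (h : ∀ i j, ∑ a ∈ s with c a = i, f a = ∑ a ∈ s with c a = j, f a) :
    (Fintype.card ι : R) ∣ ∑ a ∈ s, f a := by
  obtain rfl | ⟨b, -⟩ := s.eq_empty_or_nonempty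
  · simp
  · refine ⟨∑ a ∈ s with c a = c b, f a, ?_⟩
    calc ∑ a ∈ s, f a = ∑ i, ∑ a ∈ s with c a = i, f a := (Finset.sum_fiberwise s c f).symm
      _ = ∑ _i : ι, ∑ a ∈ s with c a = c b, f a := Fintype.sum_congr _ _ fun i ↦ h i (c b)
      _ = Fintype.card ι * ∑ a ∈ s with c a = c b, f a := by
        rw [Finset.sum_const, Finset.card_univ, nsmul_eq_mul]

theorem IsKLayered.dvd_sigma_one {n k : ℕ} (h : IsKLayered n k) : k ∣ σ 1 n := by
  obtain ⟨c, hc⟩ := h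
  simpa only [Fintype.card_fin, Nat.cast_id, ArithmeticFunction.sigma_one_apply] using
    card_dvd_sum_of_sum_fiber_eq n.divisors c (fun d ↦ d) hc

theorem sigma_prime_pow_succ {p : ℕ} (hp : p.Prime) (j a : ℕ) :
    σ j (p ^ (a + 1)) = p ^ j * σ j (p ^ a) + 1 := by
  simp only [ArithmeticFunction.sigma_apply_prime_pow hp, mul_comm _ j, pow_mul]
  exact geom_sum_succ

theorem sigma_prime_pow_succ_mul {p m : ℕ} (hp : p.Prime) (hpm : ¬p ∣ m) (j a : ℕ) :
    σ j (p ^ (a + 1) * m) = p ^ j * σ j (p ^ a * m) + σ j m := by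
  have sigma_mul (b : ℕ) : σ j (p ^ b * m) = σ j (p ^ b) * σ j m :=
    ArithmeticFunction.isMultiplicative_sigma.map_mul_of_coprime
      (((hp.coprime_iff_not_dvd).mpr hpm).pow_left b)
  rw [sigma_mul, sigma_mul, sigma_prime_pow_succ hp, add_mul, one_mul, mul_assoc]

theorem good_layered_dvd_sigma_odd_part_general {k p a m : ℕ} (hp : p.Prime) (hpm : ¬p ∣ m)
    (h : IsKLayered (p ^ a * m) k) (h_succ : IsKLayered (p ^ (a + 1) * m) k) : k ∣ σ 1 m := by
  have h_sigma := h_succ.dvd_sigma_one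
  rw [sigma_prime_pow_succ_mul hp hpm] at h_sigma
  exact (Nat.dvd_add_right (h.dvd_sigma_one.mul_left _)).mp h_sigma

/-- Let `α ≥ 1` and let `m` be odd. If `n = 2 ^ α * m` is a good `k`-layered number
(that is, `n` is `k`-layered and `2 ^ β * n` is `k`-layered for every `β ≥ 1`),
then `k` divides `σ(m)`. -/
theorem good_layered_dvd_sigma_odd_part (k α m n : ℕ) (hα : 0 < α) (hm : Odd m)
    (hmpos : 0 < m) (hn : n = 2 ^ α * m)
    (hgood : IsKLayered n k ∧ ∀ β : ℕ, 0 < β → IsKLayered (2 ^ β * n) k) :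
    k ∣ (∑ d ∈ m.divisors, d) := by
  subst hn
  have h_succ : IsKLayered (2 ^ (α + 1) * m) k := by
    simpa only [← mul_assoc, ← pow_add, add_comm] using hgood.2 1 one_pos
  rw [← ArithmeticFunction.sigma_one_apply]
  exact good_layered_dvd_sigma_odd_part_general Nat.prime_two hm.not_two_dvd_nat hgood.1 h_succ
end

section
/- If n ≠ 3 is an odd almost practical number such that 6 divides σ(n), then 2^α·n is a 3-layered number for every positive integer α. -/
open Finset

section Colorings

variable {κ : Type*} [DecidableEq κ] {A B : Finset ℕ} {v w : κ → ℕ}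

/-- The elements of `A` can be coloured so that, for every colour `i`, those of colour `i` have sum
`v i`. The colouring is a function on all of `ℕ`, as in `IsKLayered`; its values outside `A` are
irrelevant. -/
def HasColorSums (A : Finset ℕ) (v : κ → ℕ) : Prop :=
  ∃ c : ℕ → κ, ∀ i, ∑ d ∈ A with c d = i, d = v i

theorem isKLayered_iff_hasColorSums_const {n k : ℕ} :
    IsKLayered n k ↔ ∃ t, HasColorSums n.divisors (Function.const (Fin k) t) := by
  constructor
  · rintro ⟨c, hc⟩
    exact ⟨_, c, fun i => hc i (c 0)⟩
  · rintro ⟨t, c, hc⟩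
    exact ⟨c, fun i j => (hc i).trans (hc j).symm⟩

theorem hasColorSums_single (A : Finset ℕ) (i : κ) :
    HasColorSums A (Pi.single i (∑ d ∈ A, d)) := by
  refine ⟨fun _ => i, fun j => ?_⟩
  obtain rfl | hij := eq_or_ne i j
  · simp
  · simp [hij, hij.symm]

theorem HasColorSums.union (hA : HasColorSums A v) (hB : HasColorSums B w)
    (hAB : Disjoint A B) : HasColorSums (A ∪ B) (v + w) := by
  obtain ⟨c, hc⟩ := hA
  obtain ⟨c', hc'⟩ := hB
  refine ⟨fun d => if d ∈ A then c d else c' d, fun i => ?_⟩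
  rw [Pi.add_apply, ← hc i, ← hc' i, filter_union,
    sum_union (hAB.mono (filter_subset _ _) (filter_subset _ _))]
  congr 2
  · exact filter_congr fun d hd => by simp only [if_pos hd]
  · exact filter_congr fun d hd => by simp only [if_neg (disjoint_right.mp hAB hd)]

theorem HasColorSums.image_mul_left (hA : HasColorSums A v) {k : ℕ} (hk : 0 < k) :
    HasColorSums (A.image (k * ·)) (k • v) := by
  obtain ⟨c, hc⟩ := hA
  refine ⟨fun d => c (d / k), fun i => ?_⟩
  have hinj : Set.InjOn (k * ·) (A : Set ℕ) := fun _ _ _ _ => Nat.eq_of_mul_eq_mul_left hk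
  rw [Pi.smul_apply, ← hc i, sum_filter, sum_image hinj, sum_filter, smul_sum]
  simp only [smul_eq_mul, Nat.mul_div_cancel_left _ hk, mul_ite, mul_zero]

theorem hasColorSums_pair {S : Finset ℕ} (hS : S ⊆ A) {x y : ℕ} (hx : ∑ d ∈ S, d = x)
    (hxy : ∑ d ∈ A, d = x + y) (i j : κ) :
    HasColorSums A (Pi.single i x + Pi.single j y) := by
  have hy : ∑ d ∈ A \ S, d = y := by
    have := sum_sdiff (f := fun d => d) hS
    omega
  have h := (hasColorSums_single S i).union (hasColorSums_single (A \ S) j) disjoint_sdiff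
  rwa [union_sdiff_of_subset hS, hx, hy] at h

end Colorings

theorem isKLayered_two_iff {n : ℕ} :
    IsKLayered n 2 ↔ ∃ S ⊆ n.divisors, ∑ d ∈ n.divisors, d = ∑ d ∈ S, d + ∑ d ∈ S, d := by
  constructor
  · rintro ⟨c, hc⟩
    refine ⟨_, filter_subset (fun d => c d = 0) _, ?_⟩
    have hcompl : {d ∈ n.divisors | ¬ c d = 0} = {d ∈ n.divisors | c d = 1} :=
      filter_congr fun d _ => by omega
    rw [← sum_filter_add_sum_filter_not n.divisors (fun d => c d = 0), hcompl, hc 1 0]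
  · rintro ⟨S, hS, hsum⟩
    refine isKLayered_iff_hasColorSums_const.mpr ⟨∑ d ∈ S, d, ?_⟩
    convert hasColorSums_pair hS rfl hsum (0 : Fin 2) 1 using 1
    ext i
    fin_cases i <;> simp

section PrimePowMul

variable {n p : ℕ}

open scoped Pointwise in
theorem divisors_prime_pow_succ_mul (hp : p.Prime) (a : ℕ) :
    (p ^ (a + 1) * n).divisors = (p ^ a * n).divisors ∪ n.divisors.image (p ^ (a + 1) * ·) := by
  have hpow : (p ^ (a + 1)).divisors = (p ^ a).divisors ∪ {p ^ (a + 1)} := by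
    simp only [Nat.divisors_prime_pow hp, range_add_one (n := a + 1), map_insert,
      Function.Embedding.coeFn_mk, union_singleton]
  rw [Nat.divisors_mul, hpow, union_mul, ← Nat.divisors_mul, singleton_mul]
  rfl

theorem disjoint_divisors_prime_pow_mul (hp : p.Prime) (hpn : ¬ p ∣ n) (a : ℕ) :
    Disjoint (p ^ a * n).divisors (n.divisors.image (p ^ (a + 1) * ·)) := by
  rw [disjoint_right]
  rintro _ hd hdvd
  obtain ⟨e, -, rfl⟩ := mem_image.mp hd
  have hpe : p ^ a * (p * e) ∣ p ^ a * n := by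
    rw [← mul_assoc, ← pow_succ]
    exact Nat.dvd_of_mem_divisors hdvd
  exact hpn (dvd_of_mul_right_dvd (Nat.dvd_of_mul_dvd_mul_left (pow_pos hp.pos a) hpe))

theorem HasColorSums.prime_pow_succ_mul {κ : Type*} [DecidableEq κ] {v w : κ → ℕ}
    (hp : p.Prime) (hpn : ¬ p ∣ n) {a : ℕ} (hv : HasColorSums (p ^ a * n).divisors v)
    (hw : HasColorSums n.divisors w) :
    HasColorSums (p ^ (a + 1) * n).divisors (v + p ^ (a + 1) • w) := by
  rw [divisors_prime_pow_succ_mul hp]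
  exact hv.union (hw.image_mul_left (pow_pos hp.pos _)) (disjoint_divisors_prime_pow_mul hp hpn a)

end PrimePowMul

section TwoPowMul

variable {n : ℕ}

theorem HasColorSums.two_pow_succ_mul {κ : Type*} [DecidableEq κ] {v w : κ → ℕ}
    (hodd : Odd n) {a : ℕ} (hv : HasColorSums (2 ^ a * n).divisors v)
    (hw : HasColorSums n.divisors w) :
    HasColorSums (2 ^ (a + 1) * n).divisors (v + 2 ^ (a + 1) • w) :=
  hv.prime_pow_succ_mul Nat.prime_two hodd.not_two_dvd_nat hw

theorem IsKLayered.three_layered_two_mul (hodd : Odd n) (h : IsKLayered n 2) :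
    IsKLayered (2 * n) 3 := by
  obtain ⟨S, hS, hsum⟩ := isKLayered_two_iff.mp h
  have hrow₀ := hasColorSums_single n.divisors (0 : Fin 3)
  have hrow₁ := hasColorSums_pair hS rfl hsum (1 : Fin 3) 2
  have hrows := HasColorSums.two_pow_succ_mul (a := 0) hodd (by simpa using hrow₀) hrow₁
  rw [zero_add, pow_one] at hrows
  refine isKLayered_iff_hasColorSums_const.mpr ⟨2 * ∑ d ∈ S, d, ?_⟩
  convert hrows using 1
  ext i
  fin_cases i <;> simp [hsum, two_mul]

theorem IsKLayered.three_layered_two_pow_add_two_mul (hodd : Odd n) (h : IsKLayered n 2) {a : ℕ}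
    (ha : IsKLayered (2 ^ a * n) 3) : IsKLayered (2 ^ (a + 2) * n) 3 := by
  obtain ⟨S, hS, hsum⟩ := isKLayered_two_iff.mp h
  obtain ⟨t, ht⟩ := isKLayered_iff_hasColorSums_const.mp ha
  have hrow₁ := hasColorSums_single n.divisors (0 : Fin 3)
  have hrow₂ := hasColorSums_pair hS rfl hsum (1 : Fin 3) 2
  have hrows := (ht.two_pow_succ_mul hodd hrow₁).two_pow_succ_mul hodd hrow₂
  have hbalance : 2 ^ (a + 1) * (∑ d ∈ S, d + ∑ d ∈ S, d) = 2 ^ (a + 2) * ∑ d ∈ S, d := by ring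
  refine isKLayered_iff_hasColorSums_const.mpr ⟨t + 2 ^ (a + 2) * ∑ d ∈ S, d, ?_⟩
  convert hrows using 1
  ext i
  fin_cases i <;> simp [hsum, hbalance]

theorem three_layered_two_pow_mul (hodd : Odd n) (h₂ : IsKLayered n 2)
    (h₄ : IsKLayered (2 ^ 2 * n) 3) (a : ℕ) : IsKLayered (2 ^ (a + 1) * n) 3 := by
  induction a using Nat.twoStepInduction with
  | zero => simpa using h₂.three_layered_two_mul hodd
  | one => exact h₄
  | more a ih _ => exact h₂.three_layered_two_pow_add_two_mul hodd ih

theorem three_layered_four_mul (hodd : Odd n) {s : ℕ} (hσ : ∑ d ∈ n.divisors, d = 6 * s)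
    (hsub : ∀ k ∈ Icc 1 3, ∃ S ⊆ n.divisors, ∑ d ∈ S, d = k * s) :
    IsKLayered (2 ^ 2 * n) 3 := by
  obtain ⟨S₁, hS₁, hs₁⟩ := hsub 1 (by simp)
  obtain ⟨S₂, hS₂, hs₂⟩ := hsub 2 (by simp)
  obtain ⟨S₃, hS₃, hs₃⟩ := hsub 3 (by simp)
  have hrow₀ := hasColorSums_pair (y := 4 * s) hS₂ hs₂ (by omega) (1 : Fin 3) 2
  have hrow₁ := hasColorSums_pair (y := 5 * s) hS₁ hs₁ (by omega) (0 : Fin 3) 2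
  have hrow₂ := hasColorSums_pair (y := 3 * s) hS₃ hs₃ (by omega) (0 : Fin 3) 1
  have hrows := (HasColorSums.two_pow_succ_mul (a := 0) hodd (by simpa using hrow₀)
    hrow₁).two_pow_succ_mul hodd hrow₂
  refine isKLayered_iff_hasColorSums_const.mpr ⟨14 * s, ?_⟩
  convert hrows using 1
  ext i
  fin_cases i <;> simp <;> ring

theorem two_pow_mul_almostPractical_three_layered_general (hodd : Odd n) {s : ℕ}
    (hσ : ∑ d ∈ n.divisors, d = 6 * s)
    (hsub : ∀ k ∈ Icc 1 3, ∃ S ⊆ n.divisors, ∑ d ∈ S, d = k * s) :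
    ∀ α : ℕ, 0 < α → IsKLayered (2 ^ α * n) 3 := by
  intro α hα
  obtain ⟨S, hS, hsum⟩ := hsub 3 (by simp)
  have hhalf : IsKLayered n 2 := isKLayered_two_iff.mpr ⟨S, hS, by omega⟩
  obtain ⟨a, rfl⟩ := Nat.exists_eq_add_one.mpr hα
  exact three_layered_two_pow_mul hodd hhalf (three_layered_four_mul hodd hσ hsub) a

end TwoPowMul

section AlmostPractical

variable {n : ℕ}

theorem AlmostPractical.three_dvd (hap : AlmostPractical n) (hodd : Odd n)
    (hσ : 5 < ∑ d ∈ n.divisors, d) : 3 ∣ n := by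
  obtain ⟨S, hS, hsum⟩ := hap 3 (by norm_num) hσ
  by_contra h3
  have hS1 : S ⊆ {1} := by
    intro d hd
    have hdn : d ∣ n := Nat.dvd_of_mem_divisors (hS hd)
    have hd3 : d ≤ 3 := hsum ▸ single_le_sum_of_canonicallyOrdered (f := fun d => d) hd
    have hdne : d ≠ 3 := fun h => h3 (h ▸ hdn)
    obtain ⟨k, rfl⟩ := hodd.of_dvd_nat hdn
    simp only [mem_singleton]
    omega
  have hle : ∑ d ∈ S, d ≤ 1 := sum_le_sum_of_subset hS1
  omega

theorem AlmostPractical.twelve_lt_sum_divisors (hap : AlmostPractical n) (hodd : Odd n)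
    (hσ : 5 < ∑ d ∈ n.divisors, d) : 12 < ∑ d ∈ n.divisors, d := by
  have h3 : 3 ∣ n := hap.three_dvd hodd hσ
  have hn3 : n ≠ 3 := by
    rintro rfl
    exact absurd hσ (by decide)
  have hn9 : 9 ≤ n := by
    obtain ⟨k, rfl⟩ := hodd
    omega
  have hsub : {1, 3, n} ⊆ n.divisors := by
    simp [insert_subset_iff, h3, hodd.pos.ne']
  calc 12 < 1 + (3 + n) := by omega
    _ = ∑ d ∈ {1, 3, n}, d := by
      rw [sum_insert (by simp; omega), sum_pair hn3.symm]
    _ ≤ ∑ d ∈ n.divisors, d := sum_le_sum_of_subset hsub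

theorem AlmostPractical.exists_sum_eq_mul (hap : AlmostPractical n) (hodd : Odd n) {s k : ℕ}
    (hσ : ∑ d ∈ n.divisors, d = 6 * s) (hk : k ∈ Icc 1 5) :
    ∃ S ⊆ n.divisors, ∑ d ∈ S, d = k * s := by
  have hσ_pos : 0 < ∑ d ∈ n.divisors, d :=
    sum_pos (fun _ => Nat.pos_of_mem_divisors) (Nat.nonempty_divisors.mpr hodd.pos.ne')
  have hσ_lt := hap.twelve_lt_sum_divisors hodd (by omega)
  obtain ⟨hk1, hk5⟩ := mem_Icc.mp hk
  exact hap (k * s) (by nlinarith) (by nlinarith)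

end AlmostPractical

/-- If `n ≠ 3` is an odd almost practical number such that `6 ∣ σ(n)`, then
`2 ^ α * n` is a `3`-layered number for every positive integer `α`. -/
theorem two_pow_mul_almostPractical_three_layered (n : ℕ) (hn : 0 < n) (hn3 : n ≠ 3)
    (hodd : Odd n) (hap : AlmostPractical n) (h6 : 6 ∣ (∑ d ∈ n.divisors, d)) :
    ∀ α : ℕ, 0 < α → IsKLayered (2 ^ α * n) 3 := by
  obtain ⟨s, hs⟩ := h6
  exact two_pow_mul_almostPractical_three_layered_general hodd hs fun k hk =>
    hap.exists_sum_eq_mul hodd hs (Icc_subset_Icc_right (by norm_num) hk)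
end

section
/- For a positive integer n, the number n! is a 3-layered number if and only if n ≥ 5 and n ≠ 10. -/
/-!
If `n` is `3`-layered then `3 ∣ σ n`. For factorials `n!` with `n ≥ 5` the converse holds, for the
following reason. Say that `n` has window `w` if all pairs `(x, y)` within `w / 3` of `σ n / 3` are
sums of two disjoint sets of divisors of `n`. A window survives multiplication by powers of a prime
`p` as soon as `w` is about `3 * p / 2`: one corrects the residues of `x` and `y` modulo `p` by
divisors prime to `p`, and divides what is left by `p`. A search settles `120 = 5!`, each
further factor `2` nearly doubles the window, and `n!` is divisible by a power of `2` exceeding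
`n / 2`, which makes the window wide enough for all primes up to `n`.

It remains to see that `3 ∣ σ n!`, which holds if some prime `p ≡ 2 [MOD 3]` has `p ≤ n < 2 * p`,
since then `p` divides `n!` exactly once and `p + 1 ∣ σ n!`. For large `m` such a prime exists in
`(m, 2 * m]` by a Chebyshev argument. Put `N = 2 * m` and `q = ⌊N / d⌋`, and let `χ` be the
nontrivial character modulo `3`. The sum of `Λ d * (q % 2 - ⌊q / 3⌋ % 2)` over `d ≤ N` is about
`(1 - 1 / 3) * N * log 2`. For `q < 7` the bracket is `1` at `q = 1`, `-1` at `q = 4` and `0`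
otherwise, so if no prime in `(m, N]` is `2` modulo `3`, then for prime `d` it is at most `χ d` if
`q ≡ 1 [MOD 3]` and at most `0` otherwise. These character values, weighted by `Λ`, add up to at
most `log N`. The `d` with `q ≥ 7` contribute at most `2 * ψ (N / 7)` and the nonprime `d` only
`O(√N * log N)`, so `2 * log 4 / 7 < (1 - 1 / 3) * log 2` gives a contradiction. For `n = 10`
there is no such prime, and indeed `3 ∤ σ 10!`.
-/

open Finset (Ioc)
open Real (log)
open scoped ArithmeticFunction.sigma ArithmeticFunction.vonMangoldt Chebyshev Nat

/-! ### Windows of sums of disjoint sets of divisors -/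

/-- `x` and `y` are the sums of two disjoint subsets of `S`. With the rest of `S` as third part,
this encodes a partition of `S` into three parts with prescribed sums. -/
def HasDisjointSums (S : Finset ℕ) (x y : ℕ) : Prop :=
  ∃ A ⊆ S, ∃ B ⊆ S, Disjoint A B ∧ ∑ d ∈ A, d = x ∧ ∑ d ∈ B, d = y

namespace HasDisjointSums

variable {S T : Finset ℕ} {x y x' y' : ℕ}

theorem mono (h : HasDisjointSums S x y) (hST : S ⊆ T) : HasDisjointSums T x y := by
  obtain ⟨A, hA, B, hB, h⟩ := h
  exact ⟨A, hA.trans hST, B, hB.trans hST, h⟩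

theorem add_le_sum (h : HasDisjointSums S x y) : x + y ≤ ∑ d ∈ S, d := by
  obtain ⟨A, hA, B, hB, hAB, rfl, rfl⟩ := h
  rw [← Finset.sum_union hAB]
  exact Finset.sum_le_sum_of_subset (Finset.union_subset hA hB)

theorem union (h : HasDisjointSums S x y) (h' : HasDisjointSums T x' y') (hST : Disjoint S T) :
    HasDisjointSums (S ∪ T) (x + x') (y + y') := by
  obtain ⟨A, hA, B, hB, hAB, rfl, rfl⟩ := h
  obtain ⟨A', hA', B', hB', hAB', rfl, rfl⟩ := h'
  refine ⟨A ∪ A', Finset.union_subset_union hA hA', B ∪ B', Finset.union_subset_union hB hB',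
    ?_, Finset.sum_union (hST.mono hA hA'), Finset.sum_union (hST.mono hB hB')⟩
  rw [Finset.disjoint_union_left, Finset.disjoint_union_right, Finset.disjoint_union_right]
  exact ⟨⟨hAB, hST.mono hA hB'⟩, (hST.mono hB hA').symm, hAB'⟩

theorem image_mul_left {q : ℕ} (h : HasDisjointSums S x y) (hq : 0 < q) :
    HasDisjointSums (S.image (q * ·)) (q * x) (q * y) := by
  have hinj : Function.Injective (q * ·) := fun _ _ h ↦ Nat.eq_of_mul_eq_mul_left hq h
  obtain ⟨A, hA, B, hB, hAB, rfl, rfl⟩ := h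
  refine ⟨A.image (q * ·), Finset.image_subset_image hA, B.image (q * ·),
    Finset.image_subset_image hB, (Finset.disjoint_image hinj).2 hAB, ?_, ?_⟩ <;>
  rw [Finset.sum_image hinj.injOn, Finset.mul_sum]

theorem isKLayered_three {n s : ℕ} (h : HasDisjointSums n.divisors s s) (hs : σ 1 n = 3 * s) :
    IsKLayered n 3 := by
  obtain ⟨A, hA, B, hB, hAB, hAs, hBs⟩ := h
  let c : ℕ → Fin 3 := fun d ↦ if d ∈ A then 0 else if d ∈ B then 1 else 2
  have h0 : n.divisors.filter (c · = 0) = A := by grind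
  have h1 : n.divisors.filter (c · = 1) = B := by grind [Finset.disjoint_left]
  have hsum : ∑ i, ∑ d ∈ n.divisors.filter (c · = i), d = 3 * s := by
    rw [Finset.sum_fiberwise, ← hs, ArithmeticFunction.sigma_one_apply]
  rw [Fin.sum_univ_three, h0, h1, hAs, hBs] at hsum
  have hfiber (i : Fin 3) : ∑ d ∈ n.divisors.filter (c · = i), d = s := by
    fin_cases i
    · exact h0 ▸ hAs
    · exact h1 ▸ hBs
    · simp only [Fin.reduceFinMk]; omega
  exact ⟨c, fun i j ↦ (hfiber i).trans (hfiber j).symm⟩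

end HasDisjointSums

theorem le_sigma_one (n : ℕ) : n ≤ σ 1 n := by
  rcases eq_or_ne n 0 with rfl | hn
  · exact Nat.zero_le _
  rw [ArithmeticFunction.sigma_one_apply]
  exact Finset.single_le_sum (f := fun d ↦ d) (fun _ _ ↦ Nat.zero_le _) (by simp [hn])

theorem IsKLayered.exists_sigma_eq_mul {n k : ℕ} (h : IsKLayered n k) :
    ∃ s, n ≤ s ∧ σ 1 n = k * s := by
  obtain ⟨c, hc⟩ := h
  refine ⟨∑ d ∈ n.divisors.filter (c · = c n), d, ?_, ?_⟩
  · rcases eq_or_ne n 0 with rfl | hn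
    · exact Nat.zero_le _
    · exact Finset.single_le_sum (f := fun d ↦ d) (fun _ _ ↦ Nat.zero_le _) (by simp [hn])
  · rw [ArithmeticFunction.sigma_one_apply, ← Finset.sum_fiberwise _ c,
      Finset.sum_congr rfl fun i _ ↦ hc i (c n)]
    simp

/-- `|3 * x - s| ≤ w`, stated without subtraction: `x` lies within `w / 3` of `s / 3`. -/
def NearThird (s w x : ℕ) : Prop :=
  3 * x ≤ s + w ∧ s ≤ 3 * x + w

theorem NearThird.exists_modEq {s w Q : ℕ} (hQ : 0 < Q) (hQw : 3 * Q ≤ 2 * w + 1)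
    (hws : w ≤ s + 2) (x : ℕ) : ∃ u, u ≡ x [MOD Q] ∧ NearThird s w u := by
  obtain ⟨L, hL⟩ : ∃ L, L = (s - w + 2) / 3 := ⟨_, rfl⟩
  refine ⟨L + (x + (Q - 1) * L) % Q, ?_, ?_⟩
  · calc L + (x + (Q - 1) * L) % Q ≡ L + (x + (Q - 1) * L) [MOD Q] :=
          (Nat.mod_modEq _ _).add_left L
      _ = x + Q * L := by rw [add_left_comm, ← one_add_mul, Nat.add_sub_of_le (Nat.one_le_of_lt hQ)]
      _ ≡ x [MOD Q] := by simp [Nat.ModEq]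
  · have := Nat.mod_lt (x + (Q - 1) * L) hQ
    constructor <;> omega

theorem NearThird.exists_eq_add_mul {s t G Q w w' x u : ℕ} (hx : NearThird (s + Q * t) w' x)
    (hu : NearThird s G u) (hux : u ≡ x [MOD Q]) (hQ : 0 < Q) (hle : w' + G ≤ Q * w)
    (hwt : w ≤ t + 2) : ∃ x', x = u + Q * x' ∧ NearThird t w x' := by
  obtain ⟨hx₁, hx₂⟩ := hx
  obtain ⟨hu₁, hu₂⟩ := hu
  have hux' : u ≤ x := by
    by_contra! hlt
    have : Q ≤ u - x := Nat.le_of_dvd (by omega) ((Nat.modEq_iff_dvd' hlt.le).1 hux.symm)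
    have : Q * w ≤ Q * (t + 2) := Nat.mul_le_mul_left Q hwt
    linarith [Nat.add_sub_of_le hlt.le]
  obtain ⟨x', hx'⟩ := (Nat.modEq_iff_dvd' hux').1 hux
  obtain rfl : x = u + Q * x' := by omega
  refine ⟨x', rfl, le_of_mul_le_mul_left ?_ hQ, le_of_mul_le_mul_left ?_ hQ⟩ <;> linarith

/-- All pairs `x, y` with `|3 * x - σ n|, |3 * y - σ n| ≤ w` are sums of disjoint sets of
divisors of `n`. -/
def HasWindow (n w : ℕ) : Prop :=
  ∀ x y, NearThird (σ 1 n) w x → NearThird (σ 1 n) w y → HasDisjointSums n.divisors x y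

theorem HasWindow.mono {n w w' : ℕ} (h : HasWindow n w) (hw : w' ≤ w) : HasWindow n w' :=
  fun x y hx hy ↦ h x y ⟨by linarith [hx.1], by linarith [hx.2]⟩
    ⟨by linarith [hy.1], by linarith [hy.2]⟩

theorem HasWindow.le_sigma_add_two {n w : ℕ} (h : HasWindow n w) : w ≤ σ 1 n + 2 := by
  by_contra! hw
  have hmem : NearThird (σ 1 n) w ((σ 1 n + w) / 3) := by constructor <;> omega
  have hle := (h _ _ hmem hmem).add_le_sum
  rw [← ArithmeticFunction.sigma_one_apply] at hle
  omega

/-- Every pair of residues modulo `Q` is attained by a pair `u, v` of sums of disjoint sets of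
divisors of `n` with `|3 * u - σ n|, |3 * v - σ n| ≤ G`. -/
def CoversResidues (n Q G : ℕ) : Prop :=
  ∀ x y, ∃ u v, u ≡ x [MOD Q] ∧ v ≡ y [MOD Q] ∧ NearThird (σ 1 n) G u ∧
    NearThird (σ 1 n) G v ∧ HasDisjointSums n.divisors u v

theorem HasWindow.coversResidues {n w Q : ℕ} (h : HasWindow n w) (hQ : 0 < Q)
    (hQw : 3 * Q ≤ 2 * w + 1) : CoversResidues n Q w := by
  intro x y
  obtain ⟨u, hux, hu⟩ := NearThird.exists_modEq hQ hQw h.le_sigma_add_two x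
  obtain ⟨v, hvy, hv⟩ := NearThird.exists_modEq hQ hQw h.le_sigma_add_two y
  exact ⟨u, v, hux, hvy, hu, hv, h u v hu hv⟩

theorem CoversResidues.of_subset {n Q : ℕ} {T : Finset ℕ} (hT : T ⊆ n.divisors)
    (hsum : 3 * ∑ d ∈ T, d ≤ 2 * σ 1 n) (hQ : 0 < Q)
    (hres : ∀ i < Q, ∀ j < Q, ∃ A ⊆ T, ∃ B ⊆ T,
      Disjoint A B ∧ (∑ d ∈ A, d) % Q = i ∧ (∑ d ∈ B, d) % Q = j) :
    CoversResidues n Q (σ 1 n) := by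
  have hnear {C : Finset ℕ} (hC : C ⊆ T) : NearThird (σ 1 n) (σ 1 n) (∑ d ∈ C, d) := by
    have := Finset.sum_le_sum_of_subset (f := fun d ↦ d) hC
    constructor <;> omega
  intro x y
  obtain ⟨A, hA, B, hB, hAB, hx, hy⟩ := hres _ (Nat.mod_lt x hQ) _ (Nat.mod_lt y hQ)
  exact ⟨_, _, hx, hy, hnear hA, hnear hB, A, hA.trans hT, B, hB.trans hT, hAB, rfl, rfl⟩

theorem coversResidues_of_eight_dvd {n q : ℕ} (hn : 8 ∣ n) (hσ : 23 ≤ σ 1 n)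
    (hq : q = 3 ∨ q = 5) : CoversResidues n q (σ 1 n) := by
  have hn0 : n ≠ 0 := by rintro rfl; simp at hσ
  have hT : ({1, 2, 4, 8} : Finset ℕ) ⊆ n.divisors :=
    (show ({1, 2, 4, 8} : Finset ℕ) ⊆ Nat.divisors 8 by decide).trans
      (Nat.divisors_subset_of_dvd hn0 hn)
  have hsum : 3 * ∑ d ∈ ({1, 2, 4, 8} : Finset ℕ), d ≤ 2 * σ 1 n := by
    rw [show ∑ d ∈ ({1, 2, 4, 8} : Finset ℕ), d = 15 by decide]
    omega
  rcases hq with rfl | rfl <;> exact .of_subset hT hsum (by norm_num) (by decide +kernel)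

section PrimePowers

variable {m q j k : ℕ}

theorem image_mul_divisors_subset (hq : q.Prime) (hqm : ¬q ∣ m) :
    (m * q ^ j).divisors ∪ (m * q ^ k).divisors.image (q ^ (j + 1) * ·) ⊆
      (m * q ^ (j + k + 1)).divisors := by
  have hn0 : m * q ^ (j + k + 1) ≠ 0 :=
    mul_ne_zero (by rintro rfl; simp at hqm) (pow_ne_zero _ hq.ne_zero)
  refine Finset.union_subset
    (Nat.divisors_subset_of_dvd hn0 (mul_dvd_mul_left m (pow_dvd_pow q (by omega)))) ?_
  refine Finset.image_subset_iff.2 fun d hd ↦ Nat.mem_divisors.2 ⟨?_, hn0⟩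
  rw [show m * q ^ (j + k + 1) = q ^ (j + 1) * (m * q ^ k) by ring]
  exact mul_dvd_mul_left _ (Nat.dvd_of_mem_divisors hd)

theorem disjoint_divisors_image_mul (hq : q.Prime) (hqm : ¬q ∣ m) (S : Finset ℕ) :
    Disjoint (m * q ^ j).divisors (S.image (q ^ (j + 1) * ·)) := by
  refine Finset.disjoint_left.2 fun d hd hd' ↦ hqm ?_
  obtain ⟨e, -, rfl⟩ := Finset.mem_image.1 hd'
  have : q ^ (j + 1) ∣ m * q ^ j := (dvd_mul_right _ e).trans (Nat.dvd_of_mem_divisors hd)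
  rw [pow_succ', Nat.mul_dvd_mul_iff_right (pow_pos hq.pos j)] at this
  exact this

theorem sigma_one_mul_prime_pow (hq : q.Prime) (hqm : ¬q ∣ m) (j : ℕ) :
    σ 1 (m * q ^ j) = σ 1 m * ∑ i ∈ Finset.range (j + 1), q ^ i := by
  rw [ArithmeticFunction.isMultiplicative_sigma.map_mul_of_coprime
    (((Nat.Prime.coprime_iff_not_dvd hq).2 hqm).symm.pow_right j),
    ArithmeticFunction.sigma_one_apply_prime_pow hq]

theorem sigma_one_mul_prime_pow_add (hq : q.Prime) (hqm : ¬q ∣ m) :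
    σ 1 (m * q ^ (j + k + 1)) = σ 1 (m * q ^ j) + q ^ (j + 1) * σ 1 (m * q ^ k) := by
  simp only [sigma_one_mul_prime_pow hq hqm]
  rw [show j + k + 1 + 1 = (j + 1) + (k + 1) by ring, Finset.sum_range_add]
  simp only [pow_add q (j + 1), ← Finset.mul_sum]
  ring

/- First match the residues of the targets modulo `q ^ (j + 1)` with divisors of `m * q ^ j`; what
remains is `q ^ (j + 1)` times a pair of targets for the divisors of `m * q ^ k`. -/
theorem CoversResidues.hasWindow {G w w' : ℕ} (hc : CoversResidues (m * q ^ j) (q ^ (j + 1)) G)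
    (hw : HasWindow (m * q ^ k) w) (hq : q.Prime) (hqm : ¬q ∣ m)
    (hle : w' + G ≤ q ^ (j + 1) * w) : HasWindow (m * q ^ (j + k + 1)) w' := by
  intro x y hx hy
  have hQ : 0 < q ^ (j + 1) := pow_pos hq.pos _
  rw [sigma_one_mul_prime_pow_add hq hqm] at hx hy
  obtain ⟨u, v, hux, hvy, hu, hv, huv⟩ := hc x y
  obtain ⟨x', rfl, hx'⟩ := hx.exists_eq_add_mul hu hux hQ hle hw.le_sigma_add_two
  obtain ⟨y', rfl, hy'⟩ := hy.exists_eq_add_mul hv hvy hQ hle hw.le_sigma_add_two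
  exact (huv.union ((hw x' y' hx' hy').image_mul_left hQ)
    (disjoint_divisors_image_mul hq hqm _)).mono (image_mul_divisors_subset hq hqm)

namespace HasWindow

variable {w : ℕ}

theorem mul_pow_add (hj : HasWindow (m * q ^ j) w) (hk : HasWindow (m * q ^ k) w)
    (hq : q.Prime) (hqm : ¬q ∣ m) (hw : 3 * q ^ (j + 1) ≤ 2 * w + 1) :
    HasWindow (m * q ^ (j + k + 1)) w := by
  have h2 : 2 ≤ q ^ (j + 1) := hq.two_le.trans (Nat.le_self_pow (by omega) q)
  exact (hj.coversResidues (by omega) hw).hasWindow hk hq hqm (by nlinarith)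

theorem mul_pow (h : HasWindow m w) (hq : q.Prime) (hqm : ¬q ∣ m) (hw : 3 * q ≤ 2 * w + 1)
    (k : ℕ) : HasWindow (m * q ^ k) w := by
  induction k with
  | zero => simpa using h
  | succ k ih => simpa using mul_pow_add (j := 0) (by simpa using h) ih hq hqm (by simpa using hw)

theorem mul_pow_succ (h₁ : HasWindow (m * q ^ 1) w) (h₂ : HasWindow (m * q ^ 2) w)
    (hq : q.Prime) (hqm : ¬q ∣ m) (hw : 3 * q ^ 2 ≤ 2 * w + 1) (k : ℕ) :
    HasWindow (m * q ^ (k + 1)) w := by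
  induction k using Nat.twoStepInduction with
  | zero => exact h₁
  | one => exact h₂
  | more k ih _ =>
    have := mul_pow_add h₁ ih hq hqm hw
    rwa [show 1 + (k + 1) + 1 = k + 2 + 1 by ring] at this

theorem mul_of_coprime {r : ℕ} (h : HasWindow m w) (hr : r ≠ 0) (hmr : m.Coprime r)
    (hw : ∀ p, p.Prime → p ∣ r → 3 * p ≤ 2 * w + 1) : HasWindow (m * r) w := by
  induction r using Nat.recOnPosPrimePosCoprime generalizing m with
  | zero => exact absurd rfl hr
  | one => simpa using h
  | prime_pow p a hp ha =>
    have hpm : ¬p ∣ m := (Nat.Prime.coprime_iff_not_dvd hp).1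
      ((Nat.coprime_pow_right_iff ha _ _).1 hmr).symm
    exact h.mul_pow hp hpm (hw p hp (dvd_pow_self p ha.ne')) a
  | coprime a b ha hb hab iha ihb =>
    rw [← mul_assoc]
    refine ihb (iha h (by omega) hmr.coprime_mul_right_right fun p hp hpa ↦
      hw p hp (hpa.mul_right b)) (by omega) ?_ fun p hp hpb ↦ hw p hp (hpb.mul_left a)
    exact Nat.Coprime.mul_left hmr.coprime_mul_left_right hab

end HasWindow

end PrimePowers

/-- Depth-first search for disjoint sublists of `l` with sums `x` and `y`; its success certifies
`HasDisjointSums` by evaluation. -/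
def canSplit : List ℕ → ℕ → ℕ → Bool
  | [], x, y => x == 0 && y == 0
  | d :: l, x, y =>
    d ≤ x && canSplit l (x - d) y || d ≤ y && canSplit l x (y - d) || canSplit l x y

theorem hasDisjointSums_of_canSplit {l : List ℕ} {x y : ℕ} (hl : l.Nodup)
    (h : canSplit l x y = true) : HasDisjointSums l.toFinset x y := by
  induction l generalizing x y with
  | nil => simp_all [canSplit, HasDisjointSums]
  | cons d l ih =>
    obtain ⟨hd, hl⟩ := List.nodup_cons.1 hl
    have hdisj : Disjoint {d} l.toFinset := by simpa using hd
    rw [List.toFinset_cons, Finset.insert_eq]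
    simp only [canSplit, Bool.or_eq_true, Bool.and_eq_true, decide_eq_true_eq] at h
    obtain (⟨hdx, h⟩ | ⟨hdy, h⟩) | h := h
    · have hfst : HasDisjointSums {d} d 0 := ⟨{d}, subset_rfl, ∅, by simp⟩
      simpa [Nat.add_sub_of_le hdx] using hfst.union (ih hl h) hdisj
    · have hsnd : HasDisjointSums {d} 0 d := ⟨∅, by simp, {d}, subset_rfl, by simp⟩
      simpa [Nat.add_sub_of_le hdy] using hsnd.union (ih hl h) hdisj
    · exact (ih hl h).mono Finset.subset_union_right

theorem hasWindow_120 : HasWindow 120 88 := by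
  have hdiv : Nat.divisors 120 =
      [120, 60, 40, 30, 24, 20, 15, 12, 10, 8, 6, 5, 4, 3, 2, 1].toFinset := by decide +kernel
  have hσ : σ 1 120 = 360 := by decide +kernel
  have hsearch : ∀ i < 59, ∀ j < 59, canSplit
      [120, 60, 40, 30, 24, 20, 15, 12, 10, 8, 6, 5, 4, 3, 2, 1] (91 + i) (91 + j) = true := by
    decide +kernel
  rintro x y ⟨hx₁, hx₂⟩ ⟨hy₁, hy₂⟩
  rw [hσ] at *
  rw [hdiv]
  refine hasDisjointSums_of_canSplit (by decide) ?_
  have := hsearch (x - 91) (by omega) (y - 91) (by omega)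
  rwa [Nat.add_sub_of_le (by omega), Nat.add_sub_of_le (by omega)] at this

/- The width solves `w (a + 1) + 24 = 2 * w a` with `w 0 = 88`: doubling `n` doubles the window, and
matching the parity of the targets with the divisors `1` and `3` costs `24 = σ 15`. -/
theorem hasWindow_fifteen_mul_two_pow (a : ℕ) :
    HasWindow (15 * 2 ^ (a + 3)) (24 + 64 * 2 ^ a) := by
  have hσ : σ 1 15 = 24 := by decide +kernel
  have hcov : CoversResidues (15 * 2 ^ 0) (2 ^ (0 + 1)) 24 := by
    simpa [hσ] using CoversResidues.of_subset (n := 15) (Q := 2) (T := {1, 3}) (by decide)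
      (by simp [hσ]) two_pos (by decide)
  induction a with
  | zero => simpa using hasWindow_120
  | succ a ih =>
    have := hcov.hasWindow ih Nat.prime_two (by norm_num) (w' := 24 + 64 * 2 ^ (a + 1)) (by
      rw [pow_succ 2 a]; omega)
    rwa [show 0 + (a + 3) + 1 = a + 1 + 3 by ring] at this

theorem sigma_one_mul_two_pow_le {c : ℕ} (hc : ¬2 ∣ c) (a : ℕ) :
    σ 1 (c * 2 ^ a) ≤ σ 1 c * 2 ^ (a + 1) := by
  rw [sigma_one_mul_prime_pow Nat.prime_two hc]
  exact Nat.mul_le_mul_left _ (Nat.geomSum_lt le_rfl fun i hi ↦ Finset.mem_range.1 hi).le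

theorem not_dvd_mul_two_pow {c q : ℕ} (hq : q.Prime) (hq2 : q ≠ 2) (hqc : ¬q ∣ c) (b : ℕ) :
    ¬q ∣ c * 2 ^ b := fun h ↦
  (hq.dvd_mul.1 h).elim hqc fun h ↦
    hq2 ((Nat.prime_dvd_prime_iff_eq hq Nat.prime_two).1 (hq.dvd_of_dvd_pow h))

theorem HasWindow.mul_sq {c q a : ℕ} (h : HasWindow (c * 2 ^ (a + 3) * q ^ 1) (64 * 2 ^ a))
    (hq : q = 3 ∨ q = 5) (hc : 1 < c) (h2c : ¬2 ∣ c) (hqc : ¬q ∣ c) (hσ : σ 1 c + 4 ≤ 4 * q) :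
    HasWindow (c * 2 ^ (a + 3) * q ^ 2) (64 * 2 ^ a) := by
  have hprime : q.Prime := by rcases hq with rfl | rfl <;> norm_num
  have hqm : ¬q ∣ c * 2 ^ (a + 3) := not_dvd_mul_two_pow hprime (by omega) hqc _
  have h8 : 8 ∣ c * 2 ^ (a + 3) := (pow_dvd_pow 2 (by omega : 3 ≤ a + 3)).mul_left c
  have hlarge : 23 ≤ σ 1 (c * 2 ^ (a + 3)) := by
    refine le_trans ?_ (le_sigma_one _)
    have : 3 ≤ c := by omega
    have : 2 ^ 3 ≤ 2 ^ (a + 3) := Nat.pow_le_pow_right two_pos (by omega)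
    nlinarith
  have hle : 64 * 2 ^ a + σ 1 (c * 2 ^ (a + 3)) ≤ q * (64 * 2 ^ a) :=
    calc 64 * 2 ^ a + σ 1 (c * 2 ^ (a + 3)) ≤ 64 * 2 ^ a + σ 1 c * 2 ^ (a + 3 + 1) := by
          gcongr; exact sigma_one_mul_two_pow_le h2c _
      _ = 16 * 2 ^ a * (σ 1 c + 4) := by ring
      _ ≤ 16 * 2 ^ a * (4 * q) := by gcongr
      _ = q * (64 * 2 ^ a) := by ring
  have hcov : CoversResidues (c * 2 ^ (a + 3) * q ^ 0) (q ^ (0 + 1)) (σ 1 (c * 2 ^ (a + 3))) := by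
    simpa using coversResidues_of_eight_dvd h8 hlarge hq
  simpa using hcov.hasWindow h hprime hqm (by simpa using hle)

theorem hasWindow_two_pow_mul_three_pow_mul_five_pow (a i j : ℕ) :
    HasWindow (2 ^ (a + 3) * 3 ^ (i + 1) * 5 ^ (j + 1)) (64 * 2 ^ a) := by
  have ha : 1 ≤ 2 ^ a := Nat.one_le_two_pow
  have h₁₁ : HasWindow (15 * 2 ^ (a + 3)) (64 * 2 ^ a) :=
    (hasWindow_fifteen_mul_two_pow a).mono (Nat.le_add_left _ _)
  have h₂₁ : HasWindow (5 * 2 ^ (a + 3) * 3 ^ 2) (64 * 2 ^ a) := by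
    refine HasWindow.mul_sq ?_ (.inl rfl) (by norm_num) (by norm_num) (by norm_num) (by decide)
    convert h₁₁ using 1; ring
  have h₁₂ : HasWindow (3 * 2 ^ (a + 3) * 5 ^ 2) (64 * 2 ^ a) := by
    refine HasWindow.mul_sq ?_ (.inr rfl) (by norm_num) (by norm_num) (by norm_num) (by decide)
    convert h₁₁ using 1; ring
  have h₂₂ : HasWindow (9 * 2 ^ (a + 3) * 5 ^ 2) (64 * 2 ^ a) := by
    refine HasWindow.mul_sq ?_ (.inr rfl) (by norm_num) (by norm_num) (by norm_num) (by decide)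
    convert h₂₁ using 1; ring
  have h₁ : HasWindow (2 ^ (a + 3) * 3 ^ (i + 1) * 5 ^ 1) (64 * 2 ^ a) := by
    have : HasWindow (5 * 2 ^ (a + 3) * 3 ^ (i + 1)) (64 * 2 ^ a) := by
      refine .mul_pow_succ ?_ h₂₁ Nat.prime_three
        (not_dvd_mul_two_pow Nat.prime_three (by norm_num) (by norm_num) _) (by omega) i
      convert h₁₁ using 1; ring
    convert this using 1; ring
  have h₂ : HasWindow (2 ^ (a + 3) * 3 ^ (i + 1) * 5 ^ 2) (64 * 2 ^ a) := by
    have : HasWindow (25 * 2 ^ (a + 3) * 3 ^ (i + 1)) (64 * 2 ^ a) := by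
      refine .mul_pow_succ ?_ ?_ Nat.prime_three
        (not_dvd_mul_two_pow Nat.prime_three (by norm_num) (by norm_num) _) (by omega) i
      · convert h₁₂ using 1; ring
      · convert h₂₂ using 1; ring
    convert this using 1; ring
  refine h₁.mul_pow_succ h₂ Nat.prime_five ?_ (by omega) j
  rw [mul_comm]
  refine not_dvd_mul_two_pow Nat.prime_five (by norm_num) (fun h ↦ ?_) _
  have := Nat.prime_five.dvd_of_dvd_pow h
  omega

theorem exists_eq_two_pow_mul_three_pow_mul_five_pow_mul {n : ℕ} (hn : n ≠ 0) (h : 120 ∣ n) :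
    ∃ a i j r, n = 2 ^ (a + 3) * 3 ^ (i + 1) * 5 ^ (j + 1) * r ∧ Nat.Coprime 30 r := by
  obtain ⟨m, rfl⟩ := h
  obtain ⟨a, m₂, h₂, hm₂⟩ := Nat.exists_eq_pow_mul_and_not_dvd (n := m) (by omega) 2 (by norm_num)
  obtain ⟨i, m₃, h₃, hm₃⟩ := Nat.exists_eq_pow_mul_and_not_dvd (n := m₂) (by grind) 3 (by norm_num)
  obtain ⟨j, r, h₅, hr⟩ := Nat.exists_eq_pow_mul_and_not_dvd (n := m₃) (by grind) 5 (by norm_num)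
  refine ⟨a, i, j, r, by rw [hm₂, hm₃, hr]; ring, ?_⟩
  have h₂' : ¬2 ∣ r := fun h ↦ h₂ (hm₃ ▸ hr ▸ (h.mul_left _).mul_left _)
  have h₃' : ¬3 ∣ r := fun h ↦ h₃ (hr ▸ h.mul_left _)
  rw [show 30 = 2 * 3 * 5 by norm_num, Nat.coprime_mul_iff_left, Nat.coprime_mul_iff_left,
    Nat.prime_two.coprime_iff_not_dvd, Nat.prime_three.coprime_iff_not_dvd,
    Nat.prime_five.coprime_iff_not_dvd]
  exact ⟨⟨h₂', h₃'⟩, h₅⟩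

theorem isKLayered_three_of_three_dvd_sigma {n k : ℕ} (hn : n ≠ 0) (h120 : 120 ∣ n)
    (hk : 2 ^ k ∣ n) (hp : ∀ p, p.Prime → p ∣ n → p ≤ 2 ^ (k + 2)) (h3 : 3 ∣ σ 1 n) :
    IsKLayered n 3 := by
  obtain ⟨a, i, j, r, hn', hr⟩ := exists_eq_two_pow_mul_three_pow_mul_five_pow_mul hn h120
  have hr₂ : Nat.Coprime 2 r := hr.coprime_dvd_left (by norm_num)
  have hr₃ : Nat.Coprime 3 r := hr.coprime_dvd_left (by norm_num)
  have hr₅ : Nat.Coprime 5 r := hr.coprime_dvd_left (by norm_num)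
  have hka : 2 ^ k ≤ 2 ^ (a + 3) := by
    have hcop : (2 ^ k).Coprime (3 ^ (i + 1) * 5 ^ (j + 1) * r) :=
      .pow_left k (.mul_right (.mul_right (.pow_right _ (by norm_num)) (.pow_right _ (by norm_num)))
        hr₂)
    refine Nat.le_of_dvd (by positivity) (hcop.dvd_of_dvd_mul_right ?_)
    rwa [← mul_assoc, ← mul_assoc, ← hn']
  have hwindow : HasWindow n (64 * 2 ^ a) := by
    rw [hn']
    refine (hasWindow_two_pow_mul_three_pow_mul_five_pow a i j).mul_of_coprime ?_
      (.mul_left (.mul_left (.pow_left _ hr₂) (.pow_left _ hr₃)) (.pow_left _ hr₅)) ?_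
    · rintro rfl
      exact hn (by simpa using hn')
    · intro p hp' hpr
      have := hp p hp' (hn' ▸ hpr.mul_left _)
      rw [pow_add] at this hka
      omega
  obtain ⟨s, hs⟩ := h3
  have hs' : NearThird (σ 1 n) (64 * 2 ^ a) s := by constructor <;> omega
  exact (hwindow s s hs' hs').isKLayered_three hs

/-! ### Primes congruent to `2` modulo `3` in `(m, 2m]` -/

theorem sum_mul_log_eq_sum_mul_vonMangoldt {f : ArithmeticFunction ℝ}
    (hf : ∀ a b, f (a * b) = f a * f b) (n : ℕ) :
    ∑ k ∈ Ioc 0 n, f k * log k = ∑ d ∈ Ioc 0 n, f d * Λ d * ∑ k ∈ Ioc 0 (n / d), f k := by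
  have hconv (k : ℕ) : (f.pmul Λ * f) k = f k * log k := by
    rw [ArithmeticFunction.mul_apply, ← ArithmeticFunction.vonMangoldt_sum, Finset.mul_sum,
      ← Nat.sum_divisorsAntidiagonal (fun d _ ↦ f k * Λ d)]
    refine Finset.sum_congr rfl fun x hx ↦ ?_
    rw [← (Nat.mem_divisorsAntidiagonal.1 hx).1, hf, ArithmeticFunction.pmul_apply]
    ring
  simpa only [hconv, ArithmeticFunction.pmul_apply] using
    ArithmeticFunction.sum_Ioc_mul_eq_sum_sum (f.pmul Λ) f n

/-- The nontrivial Dirichlet character modulo `3`. -/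
noncomputable def chiThree : ArithmeticFunction ℝ :=
  ⟨fun k ↦ (quadraticChar (ZMod 3) k : ℤ), by simp⟩

theorem chiThree_mul (a b : ℕ) : chiThree (a * b) = chiThree a * chiThree b := by
  simp only [chiThree, ArithmeticFunction.coe_mk, Nat.cast_mul, map_mul, Int.cast_mul]

theorem chiThree_apply (k : ℕ) :
    chiThree k = if k % 3 = 1 then 1 else if k % 3 = 2 then -1 else 0 := by
  have hval : ∀ r : ℕ, r < 3 →
      quadraticChar (ZMod 3) r = if r = 1 then 1 else if r = 2 then -1 else 0 := by decide
  have := hval (k % 3) (Nat.mod_lt k three_pos)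
  rw [ZMod.natCast_mod] at this
  simp only [chiThree, ArithmeticFunction.coe_mk, this]
  split_ifs <;> simp

theorem neg_one_le_chiThree (k : ℕ) : -1 ≤ chiThree k := by
  rw [chiThree_apply]
  split_ifs <;> norm_num

theorem sum_chiThree (n : ℕ) : ∑ k ∈ Ioc 0 n, chiThree k = if n % 3 = 1 then 1 else 0 := by
  induction n with
  | zero => simp
  | succ n ih =>
    rw [Finset.sum_Ioc_succ_top n.zero_le, ih, chiThree_apply]
    split_ifs <;> first | omega | norm_num

theorem sum_chiThree_mul_log_le (n : ℕ) : ∑ k ∈ Ioc 0 n, chiThree k * log k ≤ log n := by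
  suffices ∑ k ∈ Ioc 0 n, chiThree k * log k ≤ if n % 3 = 1 then log n else 0 by
    refine this.trans ?_
    split_ifs
    · rfl
    · exact Real.log_natCast_nonneg n
  induction n with
  | zero => simp
  | succ n ih =>
    have hlog : log n ≤ log (n + 1 : ℕ) := by
      rcases n.eq_zero_or_pos with rfl | hn
      · simp
      · gcongr; omega
    rw [Finset.sum_Ioc_succ_top n.zero_le, chiThree_apply]
    split_ifs at ih ⊢ <;> first | omega | linarith

theorem sum_chiThree_mul_vonMangoldt_le (n : ℕ) :
    ∑ d ∈ Ioc 0 n, Λ d * (chiThree d * if n / d % 3 = 1 then 1 else 0) ≤ log n := by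
  have h := sum_chiThree_mul_log_le n
  rw [sum_mul_log_eq_sum_mul_vonMangoldt chiThree_mul] at h
  simp only [sum_chiThree] at h
  refine le_trans (le_of_eq (Finset.sum_congr rfl fun d _ ↦ ?_)) h
  ring

theorem log_factorial_eq_sum_vonMangoldt (n : ℕ) :
    log (n ! : ℝ) = ∑ d ∈ Ioc 0 n, Λ d * (n / d : ℕ) := by
  rw [← ArithmeticFunction.sum_Ioc_mul_zeta_eq_sum, ArithmeticFunction.vonMangoldt_mul_zeta]
  induction n with
  | zero => simp
  | succ n ih =>
    rw [Finset.sum_Ioc_succ_top n.zero_le, ← ih, Nat.factorial_succ, Nat.cast_mul,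
      Real.log_mul (by positivity) (by positivity), ArithmeticFunction.log_apply, add_comm]

theorem sum_Ioc_mul_div_eq_of_le (f : ℕ → ℝ) {g : ℕ → ℝ} (hg : g 0 = 0) {n N : ℕ} (h : n ≤ N) :
    ∑ d ∈ Ioc 0 n, f d * g (n / d) = ∑ d ∈ Ioc 0 N, f d * g (n / d) := by
  refine Finset.sum_subset (Finset.Ioc_subset_Ioc_right h) fun d hd hd' ↦ ?_
  rw [Finset.mem_Ioc] at hd hd'
  rw [Nat.div_eq_of_lt (by omega), hg, mul_zero]

theorem sum_vonMangoldt_mul_div_mod_two (n : ℕ) :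
    ∑ d ∈ Ioc 0 n, Λ d * (n / d % 2 : ℕ) = log (n ! : ℝ) - 2 * log ((n / 2)! : ℝ) := by
  rw [log_factorial_eq_sum_vonMangoldt, log_factorial_eq_sum_vonMangoldt (n / 2),
    sum_Ioc_mul_div_eq_of_le Λ Nat.cast_zero (Nat.div_le_self n 2), Finset.mul_sum,
    ← Finset.sum_sub_distrib]
  refine Finset.sum_congr rfl fun d _ ↦ ?_
  have hmod : ((n / d % 2 : ℕ) : ℝ) + 2 * (n / d / 2 : ℕ) = (n / d : ℕ) := by
    exact_mod_cast Nat.mod_add_div (n / d) 2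
  rw [Nat.div_right_comm, ← hmod]
  ring

theorem factorial_le_two_pow_mul {n : ℕ} (hn : 1 ≤ n) :
    n ! ≤ 2 ^ n * n * ((n / 2)! * (n / 2)!) := by
  have hsub : (n - n / 2)! ≤ n * (n / 2)! := by
    rcases Nat.even_or_odd' n with ⟨k, rfl | rfl⟩
    · rw [show 2 * k - 2 * k / 2 = k by omega, show 2 * k / 2 = k by omega]
      exact Nat.le_mul_of_pos_left _ (by omega)
    · rw [show 2 * k + 1 - (2 * k + 1) / 2 = k + 1 by omega, show (2 * k + 1) / 2 = k by omega,
        Nat.factorial_succ]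
      exact Nat.mul_le_mul_right _ (by omega)
  calc n ! = n.choose (n / 2) * (n / 2)! * (n - n / 2)! :=
        (Nat.choose_mul_factorial_mul_factorial (Nat.div_le_self n 2)).symm
    _ ≤ 2 ^ n * (n / 2)! * (n * (n / 2)!) := by gcongr; exact Nat.choose_le_two_pow _ _
    _ = 2 ^ n * n * ((n / 2)! * (n / 2)!) := by ring

theorem sum_vonMangoldt_mul_div_mod_two_le {n : ℕ} (hn : 1 ≤ n) :
    ∑ d ∈ Ioc 0 n, Λ d * (n / d % 2 : ℕ) ≤ n * log 2 + log n := by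
  have h : log (n ! : ℝ) ≤ log (2 ^ n * n * ((n / 2)! * (n / 2)!)) :=
    Real.log_le_log (by positivity) (by exact_mod_cast factorial_le_two_pow_mul hn)
  rw [Real.log_mul (by positivity) (by positivity), Real.log_mul (by positivity) (by positivity),
    Real.log_mul (by positivity) (by positivity), Real.log_pow] at h
  rw [sum_vonMangoldt_mul_div_mod_two]
  linarith

theorem le_sum_vonMangoldt_mul_div_mod_two {m : ℕ} (hm : 4 ≤ m) :
    m * log 4 - log m ≤ ∑ d ∈ Ioc 0 (2 * m), Λ d * (2 * m / d % 2 : ℕ) := by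
  have hpos := Nat.centralBinom_pos m
  have hfact : ((2 * m)! : ℝ) = m.centralBinom * (m ! * m !) := by
    rw [Nat.centralBinom_eq_two_mul_choose, two_mul, ← Nat.add_choose_mul_factorial_mul_factorial]
    push_cast
    ring
  have h : log ((4 : ℝ) ^ m) ≤ log (m * m.centralBinom) :=
    Real.log_le_log (by positivity) (by exact_mod_cast (Nat.four_pow_lt_mul_centralBinom m hm).le)
  rw [Real.log_mul (by positivity) (by positivity), Real.log_pow] at h
  rw [sum_vonMangoldt_mul_div_mod_two, hfact, Nat.mul_div_cancel_left m two_pos,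
    Real.log_mul (by positivity) (by positivity), Real.log_mul (by positivity) (by positivity)]
  linarith

theorem psi_div_eq_sum (n : ℕ) {k : ℕ} (hk : 0 < k) :
    ψ (n / k) = ∑ d ∈ Ioc 0 n, Λ d * if k ≤ n / d then 1 else 0 := by
  rw [Chebyshev.psi, Nat.floor_div_natCast, Nat.floor_natCast]
  simp only [mul_ite, mul_one, mul_zero]
  rw [← Finset.sum_filter]
  congr 1
  ext d
  simp only [Finset.mem_Ioc, Finset.mem_filter]
  constructor
  · rintro ⟨hd, hdk⟩
    rw [Nat.le_div_iff_mul_le hk] at hdk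
    rw [Nat.le_div_iff_mul_le hd, mul_comm]
    exact ⟨⟨hd, by nlinarith⟩, hdk⟩
  · rintro ⟨⟨hd, -⟩, hkd⟩
    rw [Nat.le_div_iff_mul_le hd, mul_comm] at hkd
    exact ⟨hd, (Nat.le_div_iff_mul_le hk).2 hkd⟩

theorem chiThree_eq_one_of_no_prime {m d : ℕ} (hm : 3 ≤ m)
    (hno : ∀ p, p.Prime → m < p → p ≤ 2 * m → p % 3 ≠ 2) (hd : d.Prime) (h : 2 * m / d = 1) :
    chiThree d = 1 := by
  rw [Nat.div_eq_iff hd.pos] at h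
  have hmod₀ : d % 3 ≠ 0 := fun h₀ ↦ by
    have := (Nat.prime_dvd_prime_iff_eq Nat.prime_three hd).1 (Nat.dvd_of_mod_eq_zero h₀)
    omega
  have hmod₂ := hno d hd (by omega) (by omega)
  rw [chiThree_apply, if_pos (by omega)]

theorem div_mod_two_le_of_no_prime {m d : ℕ} (hm : 3 ≤ m) (hd : d ∈ Ioc 0 (2 * m))
    (hno : ∀ p, p.Prime → m < p → p ≤ 2 * m → p % 3 ≠ 2) :
    ((2 * m / d % 2 : ℕ) : ℝ) ≤ (chiThree d * if 2 * m / d % 3 = 1 then 1 else 0) +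
      (2 * m / 3 / d % 2 : ℕ) + 2 * (if 7 ≤ 2 * m / d then 1 else 0) +
        2 * (if ¬d.Prime then 1 else 0) := by
  obtain ⟨hd₀, hd₂⟩ := Finset.mem_Ioc.1 hd
  have hχ := neg_one_le_chiThree d
  have hq₁ : 1 ≤ 2 * m / d := Nat.div_pos hd₂ hd₀
  have hlast : 2 * m / d = 1 → ¬d.Prime ∨ chiThree d = 1 := fun h ↦
    (em d.Prime).symm.imp_right fun hp ↦ chiThree_eq_one_of_no_prime hm hno hp h
  rw [Nat.div_right_comm]
  generalize 2 * m / d = q at *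
  have hnp : (0 : ℝ) ≤ 2 * (if ¬d.Prime then 1 else 0) := by split_ifs <;> norm_num
  rcases lt_or_ge q 7 with hq₇ | hq₇
  · interval_cases q
    · rcases hlast rfl with h | h
      · rw [if_pos h]
        norm_num
        linarith
      · simpa [h] using hnp
    all_goals norm_num at hnp ⊢; linarith
  · have hodd : ((q % 2 : ℕ) : ℝ) ≤ 1 := by exact_mod_cast Nat.le_of_lt_succ (Nat.mod_lt q two_pos)
    rw [if_pos hq₇]
    split_ifs <;> linarith

theorem mul_log_four_sub_log_le_of_no_prime {m : ℕ} (hm : 4 ≤ m)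
    (hno : ∀ p, p.Prime → m < p → p ≤ 2 * m → p % 3 ≠ 2) :
    m * log 4 - log m ≤ log (2 * m : ℕ) + ((2 * m / 3 : ℕ) * log 2 + log (2 * m / 3 : ℕ)) +
      2 * ψ ((2 * m : ℕ) / (7 : ℕ)) + 2 * (ψ (2 * m : ℕ) - θ (2 * m : ℕ)) :=
  calc m * log 4 - log m ≤ ∑ d ∈ Ioc 0 (2 * m), Λ d * (2 * m / d % 2 : ℕ) :=
        le_sum_vonMangoldt_mul_div_mod_two hm
    _ ≤ ∑ d ∈ Ioc 0 (2 * m), Λ d * ((chiThree d * if 2 * m / d % 3 = 1 then 1 else 0) +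
        (2 * m / 3 / d % 2 : ℕ) + 2 * (if 7 ≤ 2 * m / d then 1 else 0) +
        2 * (if ¬d.Prime then 1 else 0)) := by
      gcongr with d hd
      exact div_mod_two_le_of_no_prime (by omega) hd hno
    _ = ∑ d ∈ Ioc 0 (2 * m), Λ d * (chiThree d * if 2 * m / d % 3 = 1 then 1 else 0) +
        ∑ d ∈ Ioc 0 (2 * m / 3), Λ d * (2 * m / 3 / d % 2 : ℕ) +
        2 * ψ ((2 * m : ℕ) / (7 : ℕ)) + 2 * (ψ (2 * m : ℕ) - θ (2 * m : ℕ)) := by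
      rw [sum_Ioc_mul_div_eq_of_le Λ (g := fun q ↦ (q % 2 : ℕ)) (by simp)
        (Nat.div_le_self (2 * m) 3), psi_div_eq_sum _ (by norm_num),
        Chebyshev.psi_sub_theta_eq_sum_not_prime, Nat.floor_natCast, Finset.sum_filter,
        Finset.mul_sum, Finset.mul_sum, ← Finset.sum_add_distrib, ← Finset.sum_add_distrib,
        ← Finset.sum_add_distrib]
      refine Finset.sum_congr rfl fun d _ ↦ ?_
      split_ifs <;> ring
    _ ≤ _ := by
      gcongr
      · exact sum_chiThree_mul_vonMangoldt_le _
      · exact sum_vonMangoldt_mul_div_mod_two_le (by omega)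

theorem mul_log_two_le_sqrt_mul_log_of_no_prime {m : ℕ} (hm : 4 ≤ m)
    (hno : ∀ p, p.Prime → m < p → p ≤ 2 * m → p % 3 ≠ 2) :
    2 / 21 * (2 * m : ℕ) * log 2 ≤
      3 * log (2 * m : ℕ) + 6 * √(2 * m : ℕ) * log (2 * m : ℕ) := by
  have h := mul_log_four_sub_log_le_of_no_prime hm hno
  have hm₂ : (m : ℝ) = (2 * m : ℕ) / 2 := by push_cast; ring
  have hn : (8 : ℝ) ≤ (2 * m : ℕ) := by exact_mod_cast (by omega : 8 ≤ 2 * m)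
  have hthird : ((2 * m / 3 : ℕ) : ℝ) ≤ (2 * m : ℕ) / (3 : ℕ) := Nat.cast_div_le
  have hthird₀ : (0 : ℝ) < (2 * m / 3 : ℕ) := by exact_mod_cast (by omega : 0 < 2 * m / 3)
  have hlog₄ : log 4 = 2 * log 2 := by
    rw [show (4 : ℝ) = 2 ^ 2 by norm_num, Real.log_pow, Nat.cast_ofNat]
  have hψθ := Chebyshev.psi_sub_theta_le (x := (2 * m : ℕ)) (by linarith)
  have hψ := Chebyshev.psi_le (x := (2 * m : ℕ) / (7 : ℕ)) (by push_cast at hn ⊢; linarith)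
  rw [hm₂, hlog₄] at h
  rw [hlog₄] at hψ
  generalize ((2 * m : ℕ) : ℝ) = n at *
  push_cast at *
  have hlog {x : ℝ} (hx : 0 < x) (hxn : x ≤ n) : log x ≤ log n := Real.log_le_log hx hxn
  have hsqrt : √(n / 7) * log (n / 7) ≤ √n / 2 * log n := by
    gcongr
    · exact Real.log_nonneg (by linarith)
    · rw [Real.sqrt_le_left (by positivity), div_pow, Real.sq_sqrt (by linarith)]
      linarith
    · linarith
  have hlin : ((2 * m / 3 : ℕ) : ℝ) * log 2 ≤ n / 3 * log 2 := by gcongr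
  have hlog_half : log (n / 2) ≤ log n := hlog (by linarith) (by linarith)
  have hlog_third := hlog hthird₀ (by linarith)
  linarith

theorem sqrt_mul_log_lt_mul_log_two {x : ℝ} (hx : 2 ^ 21 ≤ x) :
    3 * log x + 6 * √x * log x < 2 / 21 * x * log 2 := by
  have hlog₂ := Real.log_two_gt_d9
  have hlog₂' := Real.log_two_lt_d9
  have hs : 1448 ≤ √x := Real.le_sqrt_of_sq_le (by linarith)
  have hx₀ : x = √x * √x := (Real.mul_self_sqrt (by linarith)).symm
  generalize √x = s at *
  have htangent : log s ≤ 11 * log 2 + s / 2 ^ 11 - 1 := by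
    have h := Real.log_le_sub_one_of_pos (show 0 < s / 2 ^ 11 by positivity)
    rw [Real.log_div (by linarith) (by positivity), Real.log_pow] at h
    push_cast at h
    linarith
  have hlog₀ : 0 ≤ log s := Real.log_nonneg (by linarith)
  rw [hx₀, Real.log_mul (by linarith) (by linarith)]
  calc 3 * (log s + log s) + 6 * s * (log s + log s) = (6 + 12 * s) * log s := by ring
    _ ≤ 12.005 * s * log s := by gcongr; linarith
    _ = s * (12.005 * log s) := by ring
    _ < s * (2 / 21 * s * log 2) := by
      gcongr s * ?_
      nlinarith
    _ = 2 / 21 * (s * s) * log 2 := by ring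

theorem exists_mem_lt_and_le_two_mul {l : List ℕ} {a m : ℕ}
    (hl : (a :: l).IsChain fun p q ↦ q ≤ 2 * p) (ham : a ≤ m) (hm : ∃ p ∈ l, m < p) :
    ∃ p ∈ l, m < p ∧ p ≤ 2 * m := by
  induction l generalizing a with
  | nil => simp at hm
  | cons b l ih =>
    obtain ⟨hab, hl⟩ := List.isChain_cons_cons.1 hl
    rcases lt_or_ge m b with hmb | hbm
    · exact ⟨b, List.mem_cons_self, hmb, by omega⟩
    · have hm' : ∃ p ∈ l, m < p := by simpa [hbm.not_gt] using hm
      obtain ⟨p, hp, h⟩ := ih hl hbm hm'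
      exact ⟨p, List.mem_cons_of_mem b hp, h⟩

theorem exists_prime_two_mod_three {m : ℕ} (hm : 6 ≤ m) :
    ∃ p, p.Prime ∧ m < p ∧ p ≤ 2 * m ∧ p % 3 = 2 := by
  rcases lt_or_ge m (2 ^ 20) with hsmall | hlarge
  · let l : List ℕ := [11, 17, 29, 53, 101, 197, 389, 773, 1523, 3041, 6053, 12101, 24197, 48383,
      96749, 193493, 386963, 773909, 1547807]
    have hl : ∀ p ∈ l, p.Prime ∧ p % 3 = 2 := by
      simp only [l, List.forall_mem_cons]
      norm_num
    obtain ⟨p, hp, hmp, hpm⟩ := exists_mem_lt_and_le_two_mul (a := 6) (l := l) (by simp [l]) hm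
      ⟨1547807, by simp [l], by omega⟩
    exact ⟨p, (hl p hp).1, hmp, hpm, (hl p hp).2⟩
  · by_contra! hno
    have hcast : (2 : ℝ) ^ 21 ≤ (2 * m : ℕ) := by exact_mod_cast (by omega : 2 ^ 21 ≤ 2 * m)
    exact (sqrt_mul_log_lt_mul_log_two hcast).not_ge
      (mul_log_two_le_sqrt_mul_log_of_no_prime (by omega) hno)

/-! ### Factorials -/

theorem succ_dvd_sigma_one {n p : ℕ} (hp : p.Prime) (hpn : p ∣ n) (hpn₂ : ¬p ^ 2 ∣ n) :
    p + 1 ∣ σ 1 n := by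
  obtain ⟨m, rfl⟩ := hpn
  rw [sq, Nat.mul_dvd_mul_iff_left hp.pos] at hpn₂
  refine ⟨σ 1 m, ?_⟩
  rw [mul_comm p, ← pow_one p, sigma_one_mul_prime_pow hp hpn₂, Finset.sum_range_succ,
    Finset.sum_range_one, pow_zero, pow_one, add_comm 1, mul_comm]

theorem succ_dvd_sigma_one_factorial {n p : ℕ} (hp : p.Prime) (hpn : p ≤ n)
    (hnp : n < 2 * p) : p + 1 ∣ σ 1 n ! := by
  have hlog : p.log n < 2 := Nat.log_lt_of_lt_pow (by have := hp.pos; omega) <|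
    hnp.trans_le (by rw [sq]; exact Nat.mul_le_mul_right p hp.two_le)
  refine succ_dvd_sigma_one hp (hp.dvd_factorial.2 hpn) fun h ↦ ?_
  have hle : 2 ≤ n / p := by simpa using (hp.pow_dvd_factorial_iff hlog).1 h
  exact hle.not_gt (Nat.div_lt_of_lt_mul (by rwa [mul_comm]))

theorem three_dvd_sigma_one_factorial {n : ℕ} (hn : 5 ≤ n) (hn₁₀ : n ≠ 10) : 3 ∣ σ 1 n ! := by
  suffices ∃ p, p.Prime ∧ p ≤ n ∧ n < 2 * p ∧ p % 3 = 2 by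
    obtain ⟨p, hp, hpn, hnp, hmod⟩ := this
    exact (by omega : 3 ∣ p + 1).trans (succ_dvd_sigma_one_factorial hp hpn hnp)
  rcases lt_or_ge n 10 with h | h
  · exact ⟨5, by norm_num, hn, h, by norm_num⟩
  rcases eq_or_ne n 11 with rfl | h₁₁
  · exact ⟨11, by norm_num⟩
  obtain ⟨p, hp, hlt, hle, hmod⟩ := exists_prime_two_mod_three (m := n / 2) (by omega)
  exact ⟨p, hp, by omega, by omega, hmod⟩

theorem not_three_dvd_sigma_one_factorial_ten : ¬3 ∣ σ 1 10 ! := by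
  have hσ : σ 1 7 = 8 := by decide
  rw [show 10 ! = 7 * 2 ^ 8 * 3 ^ 4 * 5 ^ 2 by decide,
    sigma_one_mul_prime_pow Nat.prime_five (by norm_num),
    sigma_one_mul_prime_pow Nat.prime_three (by norm_num),
    sigma_one_mul_prime_pow Nat.prime_two (by norm_num), hσ]
  decide

theorem not_isKLayered_three_factorial {n : ℕ} (hn : n < 5) : ¬IsKLayered n ! 3 := by
  intro h
  obtain ⟨s, hs, hσ⟩ := h.exists_sigma_eq_mul
  have : σ 1 n ! < 3 * n ! := by
    interval_cases n <;> decide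
  omega

theorem isKLayered_three_factorial_iff {n : ℕ} (hn : 5 ≤ n) :
    IsKLayered n ! 3 ↔ 3 ∣ σ 1 n ! := by
  refine ⟨fun h ↦ ?_, isKLayered_three_of_three_dvd_sigma (k := Nat.log 2 n) n.factorial_ne_zero
    (Nat.factorial_dvd_factorial hn) ?_ fun p hp hpn ↦ ?_⟩
  · obtain ⟨s, -, hs⟩ := h.exists_sigma_eq_mul
    exact ⟨s, hs⟩
  · exact Nat.dvd_factorial (by positivity) (Nat.pow_log_le_self 2 (by omega))
  · calc p ≤ n := hp.dvd_factorial.1 hpn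
      _ ≤ 2 ^ (Nat.log 2 n + 1) := (Nat.lt_pow_succ_log_self one_lt_two n).le
      _ ≤ 2 ^ (Nat.log 2 n + 2) := by gcongr <;> omega

/-- For a positive integer `n`, the number `n!` is `3`-layered
if and only if `n ≥ 5` and `n ≠ 10`. -/
theorem factorial_three_layered_iff (n : ℕ) (hn : 0 < n) :
    IsKLayered (n.factorial) 3 ↔ 5 ≤ n ∧ n ≠ 10 := by
  rcases lt_or_ge n 5 with hlt | hge
  · exact iff_of_false (not_isKLayered_three_factorial hlt) fun h ↦ hlt.not_ge h.1
  rw [isKLayered_three_factorial_iff hge]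
  refine ⟨fun h ↦ ⟨hge, ?_⟩, fun h ↦ three_dvd_sigma_one_factorial hge h.2⟩
  rintro rfl
  exact not_three_dvd_sigma_one_factorial_ten h
end

section
/- Let n be a k-multiperfect number (σ(n) = k·n) and let m be a (k+1)-multiperfect number (σ(m) = (k+1)·m) such that n divides m. If n is k-layered, then m is (k+1)-layered. -/
/-
Multiplication by `t = m / n` carries the divisors of `n` onto the divisors of `m` that are
multiples of `t`, so the `k` layers of `n` become `k` pairwise disjoint sets of divisors of `m`,
each with sum `t σ(n) / k`. Since `σ(m) / m = (1 + 1 / k) σ(n) / n`, this sum is `σ(m) / (k + 1)`,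
so the divisors of `m` that are not multiples of `t` form the missing layer.
-/

open Finset

lemma isKLayered_iff_mul_sum_eq {n k : ℕ} :
    IsKLayered n k ↔
      ∃ c : ℕ → Fin k, ∀ i, k * ∑ d ∈ n.divisors with c d = i, d = ∑ d ∈ n.divisors, d := by
  refine exists_congr fun c ↦ ⟨fun h i ↦ ?_, fun h i j ↦ ?_⟩
  · rw [← sum_fiberwise n.divisors c, sum_congr rfl fun j _ ↦ h j i]
    simp
  · exact Nat.eq_of_mul_eq_mul_left i.pos ((h i).trans (h j).symm)

lemma isKLayered_succ_of_mul_sum_castSucc_eq {n k : ℕ} (c : ℕ → Fin (k + 1))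
    (h : ∀ i : Fin k,
      (k + 1) * ∑ d ∈ n.divisors with c d = i.castSucc, d = ∑ d ∈ n.divisors, d) :
    IsKLayered n (k + 1) := by
  refine isKLayered_iff_mul_sum_eq.2 ⟨c, Fin.lastCases ?_ h⟩
  have total : (k + 1) * ∑ i, ∑ d ∈ n.divisors with c d = i, d =
      (k + 1) * ∑ d ∈ n.divisors, d := by
    rw [sum_fiberwise]
  rw [Fin.sum_univ_castSucc, mul_add, mul_sum, sum_congr rfl fun i _ ↦ h i] at total
  simp only [sum_const, card_univ, Fintype.card_fin, smul_eq_mul] at total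
  linarith

lemma sum_divisors_mul_filter_dvd {M : Type*} [AddCommMonoid M] {n t : ℕ} (ht : 0 < t)
    (p : ℕ → Prop) [DecidablePred p] (f : ℕ → M) :
    ∑ d ∈ (n * t).divisors with t ∣ d ∧ p (d / t), f d =
      ∑ e ∈ n.divisors with p e, f (e * t) := by
  refine (sum_nbij' (· * t) (· / t) ?_ ?_ ?_ ?_ ?_).symm
  · simp +contextual [Nat.mul_dvd_mul_right, ht.ne']
  · simp only [mem_filter, Nat.mem_divisors]
    rintro _ ⟨⟨hd, hnt⟩, ⟨e, rfl⟩, he⟩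
    rw [mul_comm n t] at hd
    rw [Nat.mul_div_cancel_left e ht] at he ⊢
    exact ⟨⟨Nat.dvd_of_mul_dvd_mul_left ht hd, left_ne_zero_of_mul hnt⟩, he⟩
  · simp [ht]
  · simp +contextual [Nat.div_mul_cancel]
  · simp

/-- The coloring of the divisors of a multiple `n * t` induced by a coloring `c` of the divisors of
`n`: a multiple `e * t` of `t` keeps the color of `e`, and all other numbers get the new
color `Fin.last k`. -/
def extendColoring {k : ℕ} (t : ℕ) (c : ℕ → Fin k) (d : ℕ) : Fin (k + 1) :=
  if t ∣ d then (c (d / t)).castSucc else Fin.last k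

lemma extendColoring_eq_castSucc_iff {k t d : ℕ} {c : ℕ → Fin k} {i : Fin k} :
    extendColoring t c d = i.castSucc ↔ t ∣ d ∧ c (d / t) = i := by
  by_cases htd : t ∣ d <;> simp [extendColoring, htd, (Fin.castSucc_ne_last i).symm]

lemma sum_divisors_extendColoring_eq_castSucc {n t k : ℕ} (ht : 0 < t) (c : ℕ → Fin k) (i : Fin k) :
    ∑ d ∈ (n * t).divisors with extendColoring t c d = i.castSucc, d =
      (∑ e ∈ n.divisors with c e = i, e) * t := by
  simp only [extendColoring_eq_castSucc_iff, sum_mul]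
  exact sum_divisors_mul_filter_dvd ht (c · = i) id

theorem multiperfect_layered_step_general (n m k : ℕ) (hm : 0 < m)
    (hσ : k * n * ∑ d ∈ m.divisors, d = (k + 1) * m * ∑ d ∈ n.divisors, d)
    (hdvd : n ∣ m) (h : IsKLayered n k) :
    IsKLayered m (k + 1) := by
  obtain ⟨c, hc⟩ := isKLayered_iff_mul_sum_eq.1 h
  obtain ⟨t, rfl⟩ := hdvd
  obtain ⟨hn, ht⟩ : 0 < n ∧ 0 < t := CanonicallyOrderedAdd.mul_pos.1 hm
  refine isKLayered_succ_of_mul_sum_castSucc_eq (extendColoring t c) fun i ↦ ?_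
  rw [sum_divisors_extendColoring_eq_castSucc ht]
  refine Nat.eq_of_mul_eq_mul_left (Nat.mul_pos i.pos hn) ?_
  calc k * n * ((k + 1) * ((∑ e ∈ n.divisors with c e = i, e) * t))
      = (k + 1) * (n * t) * (k * ∑ e ∈ n.divisors with c e = i, e) := by ring
    _ = k * n * ∑ d ∈ (n * t).divisors, d := by rw [hc i, hσ]

/-- Let `n` be a `k`-multiperfect number (`σ(n) = k * n`) and `m` a `(k+1)`-multiperfect
number (`σ(m) = (k+1) * m`) with `n ∣ m`. If `n` is `k`-layered, then `m` is
`(k+1)`-layered. -/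
theorem multiperfect_layered_step (n m k : ℕ) (hn : 0 < n) (hm : 0 < m)
    (hmuln : (∑ d ∈ n.divisors, d) = k * n)
    (hmulm : (∑ d ∈ m.divisors, d) = (k + 1) * m)
    (hdvd : n ∣ m) (h : IsKLayered n k) :
    IsKLayered m (k + 1) := by
  refine multiperfect_layered_step_general n m k hm ?_ hdvd h
  rw [hmuln, hmulm]
  ring
end
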